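/- For every g ≥ 1, the integral symplectic group Sp(2g,ℤ) is finitely generated and has uniformly exponential growth, i.e., ω(Sp(2g,ℤ)) > 1. -/

import Mathlib

open Matrix
/-- The matrix of the standard symplectic form
`q(x,y) = x₁y₂ - x₂y₁ + ⋯ + x_{2g-1}y_{2g} - x_{2g}y_{2g-1}` on `ℤ^{2g}`. -/
def stdSymplecticJ (g : ℕ) : Matrix (Fin (2 * g)) (Fin (2 * g)) ℤ :=
  Matrix.of fun i j =>
    if (i : ℕ) % 2 = 0 ∧ (j : ℕ) = (i : ℕ) + 1 then 1
    else if (j : ℕ) % 2 = 0 ∧ (i : ℕ) = (j : ℕ) + 1 then -1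
    else 0

/-- `Sp(2g,ℤ)`: the group of `2g × 2g` integer matrices preserving the standard
non-degenerate skew-symmetric bilinear form on `ℤ^{2g}`. -/
def Sp (g : ℕ) : Subgroup (GL (Fin (2 * g)) ℤ) where
  carrier := {M | (M : Matrix (Fin (2 * g)) (Fin (2 * g)) ℤ) * stdSymplecticJ g *
      (M : Matrix (Fin (2 * g)) (Fin (2 * g)) ℤ)ᵀ = stdSymplecticJ g}
  one_mem' := by
    simp [Units.val_one]
  mul_mem' := by
    intro a b ha hb
    simp only [Set.mem_setOf_eq] at *
    have : (a : Matrix (Fin (2 * g)) (Fin (2 * g)) ℤ) *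
        ((b : Matrix (Fin (2 * g)) (Fin (2 * g)) ℤ) * stdSymplecticJ g *
          (b : Matrix (Fin (2 * g)) (Fin (2 * g)) ℤ)ᵀ) *
        (a : Matrix (Fin (2 * g)) (Fin (2 * g)) ℤ)ᵀ = stdSymplecticJ g := by
      rw [hb, ha]
    rw [Units.val_mul, Matrix.transpose_mul]
    calc (a : Matrix (Fin (2 * g)) (Fin (2 * g)) ℤ) * b * stdSymplecticJ g *
          ((b : Matrix (Fin (2 * g)) (Fin (2 * g)) ℤ)ᵀ *
            (a : Matrix (Fin (2 * g)) (Fin (2 * g)) ℤ)ᵀ)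
        = (a : Matrix (Fin (2 * g)) (Fin (2 * g)) ℤ) *
            ((b : Matrix (Fin (2 * g)) (Fin (2 * g)) ℤ) * stdSymplecticJ g *
              (b : Matrix (Fin (2 * g)) (Fin (2 * g)) ℤ)ᵀ) *
            (a : Matrix (Fin (2 * g)) (Fin (2 * g)) ℤ)ᵀ := by noncomm_ring
      _ = stdSymplecticJ g := this
  inv_mem' := by
    intro M h
    simp only [Set.mem_setOf_eq] at *
    have hd : IsUnit (M : Matrix (Fin (2 * g)) (Fin (2 * g)) ℤ).det :=
      (Matrix.isUnit_iff_isUnit_det _).mp M.isUnit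
    have hdt : IsUnit ((M : Matrix (Fin (2 * g)) (Fin (2 * g)) ℤ)ᵀ).det := by
      rwa [Matrix.det_transpose]
    rw [Matrix.coe_units_inv, Matrix.transpose_nonsing_inv]
    calc (M : Matrix (Fin (2 * g)) (Fin (2 * g)) ℤ)⁻¹ * stdSymplecticJ g *
          ((M : Matrix (Fin (2 * g)) (Fin (2 * g)) ℤ)ᵀ)⁻¹
        = (M : Matrix (Fin (2 * g)) (Fin (2 * g)) ℤ)⁻¹ *
            ((M : Matrix (Fin (2 * g)) (Fin (2 * g)) ℤ) * stdSymplecticJ g *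
              (M : Matrix (Fin (2 * g)) (Fin (2 * g)) ℤ)ᵀ) *
            ((M : Matrix (Fin (2 * g)) (Fin (2 * g)) ℤ)ᵀ)⁻¹ := by rw [h]
      _ = ((M : Matrix (Fin (2 * g)) (Fin (2 * g)) ℤ)⁻¹ *
            (M : Matrix (Fin (2 * g)) (Fin (2 * g)) ℤ)) * stdSymplecticJ g *
            ((M : Matrix (Fin (2 * g)) (Fin (2 * g)) ℤ)ᵀ *
              ((M : Matrix (Fin (2 * g)) (Fin (2 * g)) ℤ)ᵀ)⁻¹) := by noncomm_ring
      _ = stdSymplecticJ g := by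
          rw [Matrix.nonsing_inv_mul _ hd, Matrix.mul_nonsing_inv _ hdt, one_mul, mul_one]

open Filter

variable {G : Type*} [Group G]

noncomputable def wordLength (S : Set G) (g : G) : ℕ :=
  sInf {k | ∃ w : List G, w.length = k ∧ (∀ x ∈ w, x ∈ S ∨ x⁻¹ ∈ S) ∧ w.prod = g}

noncomputable def ballCard (S : Set G) (n : ℕ) : ℕ :=
  Set.ncard {g : G | wordLength S g ≤ n}

noncomputable def growthRate (S : Set G) : ℝ :=
  limUnder atTop (fun n : ℕ => (ballCard S n : ℝ) ^ ((n : ℝ)⁻¹))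

noncomputable def minGrowth (G : Type*) [Group G] : ℝ :=
  sInf {x : ℝ | ∃ S : Finset G, Subgroup.closure (S : Set G) = ⊤ ∧ growthRate (S : Set G) = x}

/-!
Let `ρ : G → GL_n(ℤ)` be a representation all of whose congruence subgroups span `M_n(ℂ)`, and let
`y : G` be such that `ρ y` has a separable characteristic polynomial and a large trace. Modulo a
suitable `q`, the non-vanishing of the integers that express genericity of `ρ y` (a resultant,
coincidences between products of eigenvalues, principal minors in an eigenbasis) passes from `y` to
all elements congruent to `y`. Any generating set `S` reaches, within a radius `L` that does not
depend on `S`, elements congruent to `y` that form a basis of `M_n(ℂ)`.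

Let `T` be the largest modulus of a trace of a word of length at most `3 L` in `S`. In the
coordinates of this basis every relevant quantity is at most a power of `T`, and so is its inverse,
because the denominators are nonzero integers. A word `h` congruent to `y` whose trace exceeds a
large power of `T` has a gap in its spectrum, which after passing to a fixed power `h ^ m` beats all
these errors. Some element `g` of the basis moves the attracting subspace of `h ^ m`, so `h ^ m` and
`g * h ^ m` play ping-pong. They generate a free semigroup, their length is bounded independently
of `S`, and this gives uniformly exponential growth.

For `Sp(2g,ℤ)` the congruence condition holds since the shears `1 + q • J * B` are in the congruence
subgroup of level `q`, a product of two shears in each hyperbolic plane serves as `y`, and Euclid's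
algorithm on the rows of a matrix shows finite generation.
-/

open scoped Pointwise

/-! ### Growth and free pairs -/

section Growth

/-- The ball of radius `n` around `1` in the word metric of `S`, as a pointwise power: it consists
of the products of `n` factors, each of which is trivial, a letter or the inverse of a letter. -/
def wordBall (S : Set G) (n : ℕ) : Set G := insert 1 (S ∪ S⁻¹) ^ n

variable {S : Set G} {a b : G}

lemma wordBall_mono (S : Set G) : Monotone (wordBall S) :=
  fun _ _ h => Set.pow_subset_pow_right (Set.mem_insert _ _) h

lemma wordBall_add (S : Set G) (m n : ℕ) : wordBall S (m + n) = wordBall S m * wordBall S n :=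
  pow_add _ m n

lemma wordBall_mul (S : Set G) (m n : ℕ) : wordBall S (m * n) = wordBall S m ^ n :=
  pow_mul _ m n

lemma one_mem_wordBall (S : Set G) (n : ℕ) : (1 : G) ∈ wordBall S n :=
  Set.one_mem_pow (Set.mem_insert _ _)

lemma mem_wordBall_one {x : G} (hx : x ∈ S ∨ x⁻¹ ∈ S) : x ∈ wordBall S 1 := by
  rw [wordBall, pow_one]
  exact Set.mem_insert_of_mem _ hx

lemma mul_mem_wordBall {m n : ℕ} (ha : a ∈ wordBall S m) (hb : b ∈ wordBall S n) :
    a * b ∈ wordBall S (m + n) :=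
  wordBall_add S m n ▸ Set.mul_mem_mul ha hb

lemma pow_mem_wordBall {m : ℕ} (ha : a ∈ wordBall S m) (k : ℕ) : a ^ k ∈ wordBall S (m * k) :=
  wordBall_mul S m k ▸ Set.pow_mem_pow ha

lemma finite_wordBall (hS : S.Finite) (n : ℕ) : (wordBall S n).Finite := by
  induction n with
  | zero => exact Set.finite_one
  | succ n ih =>
    rw [wordBall, pow_succ]
    exact Set.Finite.mul ih ((hS.union hS.inv).insert 1)

lemma mem_wordBall_iff_exists_list (n : ℕ) :
    a ∈ wordBall S n ↔
      ∃ w : List G, w.length ≤ n ∧ (∀ x ∈ w, x ∈ S ∨ x⁻¹ ∈ S) ∧ w.prod = a := by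
  constructor
  · induction n generalizing a with
    | zero =>
      intro ha
      exact ⟨[], le_rfl, by simp, (Set.mem_one.mp ha).symm⟩
    | succ n ih =>
      rw [wordBall, pow_succ']
      rintro ⟨x, hx, y, hy, rfl⟩
      obtain ⟨w, hlen, hw, rfl⟩ := ih hy
      rcases hx with rfl | hx
      · exact ⟨w, hlen.trans n.le_succ, hw, (one_mul _).symm⟩
      · exact ⟨x :: w, Nat.succ_le_succ hlen, List.forall_mem_cons.mpr ⟨hx, hw⟩, List.prod_cons⟩
  · rintro ⟨w, hlen, hw, rfl⟩
    refine wordBall_mono S hlen ?_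
    clear hlen
    induction w with
    | nil => exact one_mem_wordBall S 0
    | cons x w ih =>
      obtain ⟨hx, hw⟩ := List.forall_mem_cons.mp hw
      rw [List.length_cons, List.prod_cons, add_comm]
      exact mul_mem_wordBall (mem_wordBall_one hx) (ih hw)

lemma exists_mem_wordBall (hS : Subgroup.closure S = ⊤) (a : G) : ∃ n, a ∈ wordBall S n := by
  have ha : a ∈ Subgroup.closure S := hS ▸ Subgroup.mem_top a
  rw [← Subgroup.mem_toSubmonoid, Subgroup.closure_toSubmonoid] at ha
  obtain ⟨w, hw, hprod⟩ := Submonoid.exists_list_of_mem_closure ha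
  exact ⟨w.length, (mem_wordBall_iff_exists_list _).mpr ⟨w, le_rfl, hw, hprod⟩⟩

lemma wordLength_le_iff (hS : Subgroup.closure S = ⊤) (a : G) (n : ℕ) :
    wordLength S a ≤ n ↔ a ∈ wordBall S n := by
  rw [mem_wordBall_iff_exists_list]
  constructor
  · intro hn
    obtain ⟨m, ha⟩ := exists_mem_wordBall hS a
    obtain ⟨w, -, hw⟩ := (mem_wordBall_iff_exists_list m).mp ha
    obtain ⟨v, hlen, hv⟩ := Nat.sInf_mem (s := {k | ∃ w : List G, w.length = k ∧
      (∀ x ∈ w, x ∈ S ∨ x⁻¹ ∈ S) ∧ w.prod = a}) ⟨w.length, w, rfl, hw⟩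
    exact ⟨v, hlen.trans_le hn, hv⟩
  · rintro ⟨w, hlen, hw⟩
    refine le_trans (Nat.sInf_le ?_) hlen
    exact ⟨w, rfl, hw⟩

lemma ballCard_eq_ncard_wordBall (hS : Subgroup.closure S = ⊤) (n : ℕ) :
    ballCard S n = (wordBall S n).ncard :=
  congrArg Set.ncard (Set.ext fun a => wordLength_le_iff hS a n)

lemma one_le_ballCard (hf : S.Finite) (hS : Subgroup.closure S = ⊤) (n : ℕ) :
    1 ≤ ballCard S n := by
  rw [ballCard_eq_ncard_wordBall hS]
  exact (Set.ncard_pos (finite_wordBall hf n)).mpr ⟨1, one_mem_wordBall S n⟩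

lemma ballCard_add_le (hf : S.Finite) (hS : Subgroup.closure S = ⊤) (m n : ℕ) :
    ballCard S (m + n) ≤ ballCard S m * ballCard S n := by
  simp only [ballCard_eq_ncard_wordBall hS, wordBall_add, ← Set.ncard_prod, ← Set.image_mul_prod]
  exact Set.ncard_image_le ((finite_wordBall hf m).prod (finite_wordBall hf n))

lemma subadditive_log_ballCard (hf : S.Finite) (hS : Subgroup.closure S = ⊤) :
    Subadditive fun n => Real.log (ballCard S n) := by
  have hpos (n : ℕ) : (0 : ℝ) < ballCard S n := by exact_mod_cast one_le_ballCard hf hS n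
  intro m n
  rw [← Real.log_mul (hpos m).ne' (hpos n).ne']
  exact Real.log_le_log (hpos _) (by exact_mod_cast ballCard_add_le hf hS m n)

lemma tendsto_growthRate (hf : S.Finite) (hS : Subgroup.closure S = ⊤) :
    Tendsto (fun n : ℕ => (ballCard S n : ℝ) ^ (n : ℝ)⁻¹) atTop (nhds (growthRate S)) := by
  have hone (n : ℕ) : (1 : ℝ) ≤ ballCard S n := by exact_mod_cast one_le_ballCard hf hS n
  have hbdd : BddBelow (Set.range fun n : ℕ => Real.log (ballCard S n) / n) := by
    refine ⟨0, ?_⟩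
    rintro _ ⟨n, rfl⟩
    exact div_nonneg (Real.log_nonneg (hone n)) n.cast_nonneg
  have hlim := (Real.continuous_exp.tendsto _).comp
    ((subadditive_log_ballCard hf hS).tendsto_lim hbdd)
  refine tendsto_nhds_limUnder ⟨_, hlim.congr fun n => ?_⟩
  rw [Function.comp_apply, Real.rpow_def_of_pos (zero_lt_one.trans_le (hone n)), div_eq_mul_inv]

/-- No product of copies of `a` and `b` starting with `a` equals one starting with `b`; by left
cancellation, `a` and `b` then freely generate a semigroup. -/
def FreePair (a b : G) : Prop :=
  ∀ x ∈ Submonoid.closure {a, b}, ∀ y ∈ Submonoid.closure {a, b}, a * x ≠ b * y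

lemma FreePair.ncard_pow (hab : FreePair a b) (j : ℕ) : (({a, b} : Set G) ^ j).ncard = 2 ^ j := by
  induction j with
  | zero => exact Set.ncard_singleton 1
  | succ j ih =>
    have hfin : (({a, b} : Set G) ^ j).Finite := Set.finite_of_ncard_ne_zero (by simp [ih])
    have hclosure : ({a, b} : Set G) ^ j ⊆ Submonoid.closure {a, b} :=
      Submonoid.subset_closure.trans Submonoid.closure_pow_le
    have hdisj : Disjoint (a • ({a, b} : Set G) ^ j) (b • ({a, b} : Set G) ^ j) := by
      rw [Set.disjoint_left]
      rintro _ ⟨x, hx, rfl⟩ ⟨y, hy, hxy⟩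
      exact hab x (hclosure hx) y (hclosure hy) hxy.symm
    rw [pow_succ', Set.pair_mul, Set.ncard_union_eq hdisj hfin.smul_set hfin.smul_set,
      Set.ncard_smul_set, Set.ncard_smul_set, ih, pow_succ, mul_two]

lemma FreePair.two_rpow_inv_le_growthRate (hab : FreePair a b) (hf : S.Finite)
    (hS : Subgroup.closure S = ⊤) {l : ℕ} (hl : l ≠ 0) (ha : a ∈ wordBall S l)
    (hb : b ∈ wordBall S l) : (2 : ℝ) ^ (l : ℝ)⁻¹ ≤ growthRate S := by
  have hcard (j : ℕ) : 2 ^ j ≤ ballCard S (l * j) := by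
    rw [ballCard_eq_ncard_wordBall hS, ← hab.ncard_pow j]
    refine Set.ncard_le_ncard ?_ (finite_wordBall hf _)
    rw [wordBall_mul]
    exact Set.pow_subset_pow_left (Set.pair_subset ha hb)
  have hmul : Tendsto (fun j : ℕ => l * j) atTop atTop :=
    tendsto_id.const_mul_atTop' (Nat.pos_of_ne_zero hl)
  refine ge_of_tendsto ((tendsto_growthRate hf hS).comp hmul) ?_
  filter_upwards [eventually_ne_atTop 0] with j hj
  calc (2 : ℝ) ^ (l : ℝ)⁻¹ = ((2 : ℝ) ^ j) ^ ((l * j : ℕ) : ℝ)⁻¹ := by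
        rw [← Real.rpow_natCast, ← Real.rpow_mul zero_le_two]
        congr 1
        push_cast
        field_simp
    _ ≤ (ballCard S (l * j) : ℝ) ^ ((l * j : ℕ) : ℝ)⁻¹ := by
        gcongr
        exact_mod_cast hcard j

theorem one_lt_minGrowth_of_freePair (hfg : Group.FG G) {l : ℕ} (hl : l ≠ 0)
    (hfree : ∀ S : Finset G, Subgroup.closure (S : Set G) = ⊤ →
      ∃ a ∈ wordBall (S : Set G) l, ∃ b ∈ wordBall (S : Set G) l, FreePair a b) :
    1 < minGrowth G := by
  have hone : (1 : ℝ) < 2 ^ (l : ℝ)⁻¹ := Real.one_lt_rpow one_lt_two (by positivity)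
  refine hone.trans_le (le_csInf ?_ ?_)
  · obtain ⟨S, hS⟩ := Group.fg_def.mp hfg
    exact ⟨_, S, hS, rfl⟩
  · rintro x ⟨S, hS, rfl⟩
    obtain ⟨a, ha, b, hb, hab⟩ := hfree S hS
    exact hab.two_rpow_inv_le_growthRate S.finite_toSet hS hl ha hb

end Growth

section FiniteQuotient

variable {F : Type*} [Group F]

lemma image_wordBall (φ : G →* F) (S : Set G) (n : ℕ) :
    φ '' wordBall S n = wordBall (φ '' S) n := by
  rw [wordBall, wordBall, Set.image_pow, Set.image_insert_eq, map_one, Set.image_union,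
    Set.image_inv]

/-- A finite group has only finitely many subsets, so the radius can be chosen independently of
the generating set. -/
lemma exists_wordBall_surjOn_range [Finite F] (φ : G →* F) :
    ∃ L, ∀ S : Set G, Subgroup.closure S = ⊤ → ∀ γ, ∃ x ∈ wordBall S L, φ x = φ γ := by
  have hradius (A : Set F) (f : F) : ∃ n, (∃ m, f ∈ wordBall A m) → f ∈ wordBall A n := by
    by_cases h : ∃ m, f ∈ wordBall A m
    exacts [h.imp fun _ hm _ => hm, ⟨0, fun h' => absurd h' h⟩]
  choose radius hradius using hradius
  obtain ⟨L, hL⟩ := (Set.finite_range fun z : Set F × F => radius z.1 z.2).bddAbove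
  refine ⟨L, fun S hS γ => ?_⟩
  obtain ⟨n, hn⟩ := exists_mem_wordBall hS γ
  have hφγ : φ γ ∈ wordBall (φ '' S) n := image_wordBall φ S n ▸ Set.mem_image_of_mem φ hn
  have hmem := wordBall_mono _ (hL ⟨(φ '' S, φ γ), rfl⟩) (hradius _ _ ⟨n, hφγ⟩)
  rwa [← image_wordBall] at hmem

end FiniteQuotient

/-! ### Ping-pong -/

section PingPong

section Slope

variable {R : Type*} [Ring R] {p x y s s' : R}

/-- For an idempotent `p` of a ring `R`, the right ideal `x R` is the graph `s R` of a map from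
`p R` to `(1 - p) R`; the element `s` encodes the map as `s = p + s (1 - p)`. -/
structure IsSlope (p x s : R) : Prop where
  proj_mul : p * s = p
  mul_proj_mul : s * (p * x) = x
  exists_mul_eq : ∃ w, x * w = s

namespace IsSlope

lemma mul_proj (h : IsSlope p x s) : s * p = s := by
  obtain ⟨w, hw⟩ := h.exists_mul_eq
  calc s * p = s * (p * x) * w := by rw [mul_assoc, mul_assoc, hw, h.proj_mul]
    _ = s := by rw [h.mul_proj_mul, hw]

lemma unique (h : IsSlope p x s) (h' : IsSlope p x s') : s = s' := by
  obtain ⟨w, hw⟩ := h'.exists_mul_eq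
  calc s = s * (p * x) * w := by rw [mul_assoc, mul_assoc, hw, h'.proj_mul, h.mul_proj]
    _ = s' := by rw [h.mul_proj_mul, hw]

lemma self (h : IsSlope p x s) : IsSlope p s s :=
  ⟨h.proj_mul, by rw [h.proj_mul, h.mul_proj], 1, mul_one s⟩

lemma sub_proj (h : IsSlope p x s) : s - p = (1 - p) * s := by rw [sub_mul, one_mul, h.proj_mul]

lemma mul_left_of_commute (h : IsSlope p x s) {y y' : R} (hy : y * y' = 1) (hy' : y' * y = 1)
    (hcomm : Commute y p) : IsSlope p (y * x) (y * s * y') where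
  proj_mul := by
    rw [← mul_assoc, ← mul_assoc, ← hcomm.eq, mul_assoc y p s, h.proj_mul, hcomm.eq, mul_assoc,
      hy, mul_one]
  mul_proj_mul := by
    rw [← mul_assoc p, ← hcomm.eq, mul_assoc y p, mul_assoc, ← mul_assoc y', hy', one_mul,
      mul_assoc, h.mul_proj_mul]
  exists_mul_eq := by
    obtain ⟨w, hw⟩ := h.exists_mul_eq
    exact ⟨w * y', by rw [← mul_assoc, mul_assoc y, hw]⟩

lemma mul_left_of_inverse (h : IsSlope p x s) (hp : IsIdempotentElem p) {u r : R}
    (hr : (p * u * s + (1 - p)) * r = 1) (hr' : r * (p * u * s + (1 - p)) = 1) :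
    IsSlope p (u * x) (u * s * r) := by
  have hleft : p * (p * u * s + (1 - p)) = p * u * s := by
    simp only [mul_add, ← mul_assoc, hp.eq, hp.mul_one_sub_self, add_zero]
  have hright : (p * u * s + (1 - p)) * p = p * u * s := by
    rw [add_mul, mul_assoc, h.mul_proj, hp.one_sub_mul_self, add_zero]
  have hcomm : r * p = p * r := by
    calc r * p = r * (p * (p * u * s + (1 - p))) * r := by
          rw [← mul_assoc, mul_assoc (r * p), hr, mul_one]
      _ = r * ((p * u * s + (1 - p)) * p) * r := by rw [hleft, hright]
      _ = p * r := by rw [← mul_assoc, hr', one_mul]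
  constructor
  · calc p * (u * s * r) = p * ((p * u * s + (1 - p)) * r) := by
          rw [← mul_assoc p (_ + _), hleft, ← mul_assoc, ← mul_assoc]
      _ = p := by rw [hr, mul_one]
  · calc u * s * r * (p * (u * x)) = u * s * r * (p * u * s) * (p * x) := by
          simp only [mul_assoc, h.mul_proj_mul]
      _ = u * (s * (r * p * (p * u * s + (1 - p)))) * (p * x) := by
          rw [mul_assoc r, hleft]; simp only [mul_assoc]
      _ = u * x := by
          rw [hcomm, mul_assoc p, hr', mul_one, h.mul_proj, mul_assoc, h.mul_proj_mul]
  · obtain ⟨w, hw⟩ := h.exists_mul_eq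
    exact ⟨w * r, by rw [← mul_assoc, mul_assoc u, hw]⟩

end IsSlope

end Slope

variable {A : Type*} [NormedRing A] {p u x s : A} {c : ℝ}

lemma norm_mul_mul_le (a b d : A) : ‖a * b * d‖ ≤ ‖a‖ * ‖b‖ * ‖d‖ :=
  (norm_mul_le _ _).trans (mul_le_mul_of_nonneg_right (norm_mul_le _ _) (norm_nonneg _))

lemma IsSlope.norm_conj_sub_le (h : IsSlope p x s) (hp : IsIdempotentElem p) {y y' : A}
    (hy : y * y' = 1) (hcomm : Commute y p) :
    ‖y * s * y' - p‖ ≤ ‖y * (1 - p)‖ * ‖s - p‖ * ‖p * y'‖ := by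
  have hp' : y * p * y' = p := by rw [hcomm.eq, mul_assoc, hy, mul_one]
  have heq : y * s * y' - p = y * (1 - p) * (s - p) * (p * y') := by
    have : (1 - p) * (s - p) * p = s - p := by
      rw [h.sub_proj, ← mul_assoc, hp.one_sub.eq, mul_assoc, h.mul_proj]
    calc y * s * y' - p = y * (s - p) * y' := by rw [mul_sub, sub_mul, hp']
      _ = y * ((1 - p) * (s - p) * p) * y' := by rw [this]
      _ = y * (1 - p) * (s - p) * (p * y') := by simp only [mul_assoc]
  rw [heq]
  exact norm_mul_mul_le _ _ _

/-- `c` bounds the position of `u` relative to the decomposition given by `p`: the corner `p u p`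
is invertible, with inverse of size at most `c`, and `u` moves `p A` by at least `1 / c`. -/
structure IsTransverse (p u : A) (c : ℝ) : Prop where
  one_le : 1 ≤ c
  idempotent : IsIdempotentElem p
  norm_proj_le : ‖p‖ ≤ c
  norm_one_sub_proj_le : ‖1 - p‖ ≤ c
  norm_le : ‖u‖ ≤ c
  exists_inverse : ∃ v : Aˣ, (v : A) = p * u * p + (1 - p) ∧ ‖((v⁻¹ : Aˣ) : A)‖ ≤ c
  one_le_mul_norm : 1 ≤ c * ‖(1 - p) * u * p‖

lemma IsTransverse.norm_slope_le (hu : IsTransverse p u c) (hs : ‖s - p‖ * (8 * c ^ 3) ≤ 1) :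
    ‖s‖ ≤ 2 * c := by
  have hc := hu.one_le
  have hc3 : 1 ≤ c ^ 3 := one_le_pow₀ hc
  have hsp : ‖s - p‖ ≤ 1 := by nlinarith [norm_nonneg (s - p)]
  linarith [norm_le_norm_add_norm_sub' s p, hu.norm_proj_le]

lemma IsTransverse.exists_inverse_near [CompleteSpace A] [Nontrivial A] (hu : IsTransverse p u c)
    (hs : ‖s - p‖ * (8 * c ^ 3) ≤ 1) :
    ∃ v : Aˣ, (v : A) = p * u * s + (1 - p) ∧ ‖((v⁻¹ : Aˣ) : A)‖ ≤ 2 * c := by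
  obtain ⟨v, hv, hvc⟩ := hu.exists_inverse
  have hc := hu.one_le
  have hdiff : p * u * s + (1 - p) - v = p * u * (s - p) := by rw [hv, mul_sub]; abel
  have hsmall : c * ‖p * u * s + (1 - p) - v‖ ≤ 1 / 8 := by
    calc c * ‖p * u * s + (1 - p) - v‖ ≤ c * (c * c * ‖s - p‖) := by
          rw [hdiff]
          gcongr
          refine (norm_mul_mul_le _ _ _).trans ?_
          gcongr
          exacts [hu.norm_proj_le, hu.norm_le]
      _ ≤ 1 / 8 := by linarith
  have hpos : 0 < ‖((v⁻¹ : Aˣ) : A)‖ := norm_pos_iff.mpr (Units.ne_zero v⁻¹)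
  have hnear : ‖p * u * s + (1 - p) - v‖ < ‖((v⁻¹ : Aˣ) : A)‖⁻¹ := by
    rw [← one_div, lt_div_iff₀ hpos, mul_comm]
    exact ((mul_le_mul_of_nonneg_right hvc (norm_nonneg _)).trans hsmall).trans_lt (by norm_num)
  let w := v.ofNearby _ hnear
  refine ⟨w, rfl, ?_⟩
  have hw : ((w⁻¹ : Aˣ) : A) = ↑v⁻¹ - ↑v⁻¹ * (p * u * s + (1 - p) - v) * ↑w⁻¹ := by
    have : (p * u * s + (1 - p)) * ↑w⁻¹ = 1 := w.mul_inv
    rw [mul_assoc, sub_mul, this, mul_sub, mul_one, Units.inv_mul_cancel_left, sub_sub_cancel]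
  have hle : ‖((w⁻¹ : Aˣ) : A)‖ ≤ c + 1 / 8 * ‖((w⁻¹ : Aˣ) : A)‖ := by
    calc ‖((w⁻¹ : Aˣ) : A)‖ ≤ ‖((v⁻¹ : Aˣ) : A)‖ +
          ‖((v⁻¹ : Aˣ) : A)‖ * ‖p * u * s + (1 - p) - v‖ * ‖((w⁻¹ : Aˣ) : A)‖ := by
          conv_lhs => rw [hw]
          exact (norm_sub_le _ _).trans (by gcongr; exact norm_mul_mul_le _ _ _)
      _ ≤ c + c * ‖p * u * s + (1 - p) - v‖ * ‖((w⁻¹ : Aˣ) : A)‖ := by gcongr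
      _ ≤ c + 1 / 8 * ‖((w⁻¹ : Aˣ) : A)‖ := by gcongr
  linarith [norm_nonneg ((w⁻¹ : Aˣ) : A)]

lemma IsTransverse.exists_isSlope [CompleteSpace A] [Nontrivial A] (hu : IsTransverse p u c)
    (h : IsSlope p x s) (hs : ‖s - p‖ * (8 * c ^ 3) ≤ 1) :
    ∃ s', IsSlope p (u * x) s' ∧ ‖s' - p‖ ≤ 5 * c ^ 3 ∧ 1 < ‖s' - p‖ * (8 * c ^ 3) := by
  obtain ⟨v, hv, hvc⟩ := hu.exists_inverse_near hs
  have hc := hu.one_le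
  have hs2 : ‖s‖ ≤ 2 * c := hu.norm_slope_le hs
  have hslope : IsSlope p (u * x) (u * s * ↑v⁻¹) :=
    h.mul_left_of_inverse hu.idempotent (hv ▸ v.mul_inv) (hv ▸ v.inv_mul)
  refine ⟨_, hslope, ?_, ?_⟩
  · calc ‖u * s * ↑v⁻¹ - p‖ ≤ c * (2 * c) * (2 * c) + c := by
          refine (norm_sub_le _ _).trans (add_le_add ((norm_mul_mul_le _ _ _).trans ?_)
            hu.norm_proj_le)
          gcongr
          exact hu.norm_le
      _ ≤ 5 * c ^ 3 := by nlinarith [le_self_pow₀ hc (n := 3) (by norm_num)]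
  · set s' := u * s * ↑v⁻¹
    have hmove : (1 - p) * u * p = (s' - p) * u * s - (1 - p) * u * (s - p) := by
      have hs'u : s' * (u * s) = u * s := by
        have := (h.self.mul_left_of_inverse hu.idempotent (hv ▸ v.mul_inv)
          (hv ▸ v.inv_mul)).mul_proj_mul
        rwa [← mul_assoc, hslope.mul_proj] at this
      rw [mul_assoc (s' - p), sub_mul s', hs'u]
      noncomm_ring
    have hle : ‖(1 - p) * u * p‖ ≤ ‖s' - p‖ * c * (2 * c) + c * c * ‖s - p‖ := by
      rw [hmove]
      refine (norm_sub_le _ _).trans (add_le_add ?_ ?_) <;>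
        refine (norm_mul_mul_le _ _ _).trans ?_ <;> gcongr
      exacts [hu.norm_le, hu.norm_one_sub_proj_le, hu.norm_le]
    by_contra! hs'
    have := hu.one_le_mul_norm.trans (mul_le_mul_of_nonneg_left hle (by positivity))
    linarith

/-- Ping-pong on the graphs over `p A`: `φ h` flattens every graph of bounded slope, while `φ g`
steepens the flat ones. -/
theorem IsTransverse.freePair [CompleteSpace A] [Nontrivial A] {φ : G →* A} {g h : G}
    (hg : IsTransverse p (φ g) c) (hcomm : Commute (φ h) p)
    (hgap : ‖φ h * (1 - p)‖ * ‖p * φ h⁻¹‖ * (40 * c ^ 6) ≤ 1) : FreePair h (g * h) := by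
  have hc := hg.one_le
  have hinv : φ h * φ h⁻¹ = 1 := by rw [← map_mul, mul_inv_cancel, map_one]
  have hinv' : φ h⁻¹ * φ h = 1 := by rw [← map_mul, inv_mul_cancel, map_one]
  have hflat {x s : A} (hx : IsSlope p x s) (hs : ‖s - p‖ ≤ 5 * c ^ 3) :
      ∃ s', IsSlope p (φ h * x) s' ∧ ‖s' - p‖ * (8 * c ^ 3) ≤ 1 := by
    refine ⟨_, hx.mul_left_of_commute hinv hinv' hcomm, ?_⟩
    calc ‖φ h * s * φ h⁻¹ - p‖ * (8 * c ^ 3)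
        ≤ ‖φ h * (1 - p)‖ * (5 * c ^ 3) * ‖p * φ h⁻¹‖ * (8 * c ^ 3) := by
          gcongr
          exact (hx.norm_conj_sub_le hg.idempotent hinv hcomm).trans (by gcongr)
      _ = ‖φ h * (1 - p)‖ * ‖p * φ h⁻¹‖ * (40 * c ^ 6) := by ring
      _ ≤ 1 := hgap
  have hsteep {x s : A} (hx : IsSlope p x s) (hs : ‖s - p‖ ≤ 5 * c ^ 3) :
      ∃ s', IsSlope p (φ (g * h) * x) s' ∧ ‖s' - p‖ ≤ 5 * c ^ 3 ∧ 1 < ‖s' - p‖ * (8 * c ^ 3) := by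
    obtain ⟨t, ht, hflat⟩ := hflat hx hs
    rw [map_mul, mul_assoc]
    exact hg.exists_isSlope ht hflat
  have hbounded (x : G) (hx : x ∈ Submonoid.closure {h, g * h}) :
      ∃ s, IsSlope p (φ x * p) s ∧ ‖s - p‖ ≤ 5 * c ^ 3 := by
    induction hx using Submonoid.closure_induction_left with
    | one =>
      refine ⟨p, ⟨hg.idempotent, ?_, p, ?_⟩, ?_⟩
      · rw [map_one, one_mul, hg.idempotent.eq, hg.idempotent.eq]
      · rw [map_one, one_mul, hg.idempotent.eq]
      · rw [sub_self, norm_zero]; positivity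
    | mul_left y hy x _ ih =>
      obtain ⟨s, hs, hbound⟩ := ih
      rw [map_mul, mul_assoc]
      rcases hy with rfl | rfl
      · obtain ⟨s', hs', hflat⟩ := hflat hs hbound
        have hc3 : 1 ≤ c ^ 3 := one_le_pow₀ hc
        exact ⟨s', hs', by nlinarith [norm_nonneg (s' - p)]⟩
      · obtain ⟨s', hs', hbound', -⟩ := hsteep hs hbound
        exact ⟨s', hs', hbound'⟩
  intro x hx y hy hxy
  obtain ⟨s, hs, hbound⟩ := hbounded x hx
  obtain ⟨t, ht, hbound'⟩ := hbounded y hy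
  obtain ⟨s', hs', hflat⟩ := hflat hs hbound
  obtain ⟨t', ht', -, hsteep⟩ := hsteep ht hbound'
  rw [← mul_assoc, ← map_mul, hxy, map_mul, mul_assoc] at hs'
  exact (hs'.unique ht' ▸ hflat).not_gt hsteep

end PingPong

/-! ### Diagonalizable matrices -/

section Diagonalization

variable {n : Type*} [Fintype n] [DecidableEq n] {K : Type*} [Field K] {h : Matrix n n K}

/-- A diagonalization `h = Q (diagonal λ) Q⁻¹` of a matrix. -/
structure Diagonalization (h : Matrix n n K) where
  eigenvalue : n → K
  basis : (Matrix n n K)ˣ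
  eq_conj : h = basis * diagonal eigenvalue * ((basis⁻¹ : (Matrix n n K)ˣ) : Matrix n n K)

lemma exists_diagonalization_of_hasEigenvalue {eigenvalue : n → K}
    (hinj : Function.Injective eigenvalue)
    (heig : ∀ a, Module.End.HasEigenvalue (toLin' h) (eigenvalue a)) :
    ∃ D : Diagonalization h, D.eigenvalue = eigenvalue := by
  choose v hv using fun a => (heig a).exists_hasEigenvector
  have hindep : LinearIndependent K (of v)ᵀ.col :=
    Module.End.eigenvectors_linearIndependent' (toLin' h) eigenvalue hinj v hv
  obtain ⟨Q, hQ⟩ := linearIndependent_cols_iff_isUnit.mp hindep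
  refine ⟨⟨eigenvalue, Q, ?_⟩, rfl⟩
  rw [Units.eq_mul_inv_iff_mul_eq, hQ]
  ext i a
  have := congrFun (hv a).apply_eq_smul i
  rw [toLin'_apply, Pi.smul_apply, smul_eq_mul, mul_comm] at this
  rw [mul_diagonal]
  exact this

lemma separable_charpoly_of_hasEigenvalue {eigenvalue : n → K}
    (hinj : Function.Injective eigenvalue)
    (heig : ∀ a, Module.End.HasEigenvalue (toLin' h) (eigenvalue a)) : h.charpoly.Separable := by
  obtain ⟨D, rfl⟩ := exists_diagonalization_of_hasEigenvalue hinj heig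
  rw [D.eq_conj, coe_units_inv, charpoly_units_conj, charpoly_diagonal,
    Polynomial.separable_prod_X_sub_C_iff]
  exact hinj

open Polynomial in
lemma exists_diagonalization_of_separable [IsAlgClosed K] (hsep : h.charpoly.Separable) :
    ∃ D : Diagonalization h, Function.Injective D.eigenvalue := by
  classical
  have hcard : h.charpoly.roots.toFinset.card = Fintype.card n := by
    rw [Multiset.toFinset_card_of_nodup (nodup_roots hsep),
      ← (IsAlgClosed.splits h.charpoly).natDegree_eq_card_roots, charpoly_natDegree_eq_dim]
  let e : n ≃ h.charpoly.roots.toFinset := Fintype.equivOfCardEq (by simp [hcard])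
  have heig (a : n) : Module.End.HasEigenvalue (toLin' h) (e a) := by
    rw [Module.End.hasEigenvalue_iff_mem_spectrum, spectrum_toLin',
      mem_spectrum_iff_isRoot_charpoly]
    exact (mem_roots'.mp (Multiset.mem_toFinset.mp (e a).2)).2
  have hinj : Function.Injective fun a => (e a : K) := Subtype.val_injective.comp e.injective
  obtain ⟨D, hD⟩ := exists_diagonalization_of_hasEigenvalue hinj heig
  exact ⟨D, by rwa [hD]⟩

namespace Diagonalization

variable (D : Diagonalization h)

/-- The functional calculus of `h`: a function on the set of eigenvalues, seen as a function on
their indices, is sent to the matrix with the same eigenvectors as `h` and these values as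
eigenvalues. -/
noncomputable def calculus : (n → K) →ₐ[K] Matrix n n K :=
  (MulSemiringAction.toAlgEquiv K (Matrix n n K) (ConjAct.toConjAct D.basis)).toAlgHom.comp
    (diagonalAlgHom K)

lemma calculus_apply (d : n → K) :
    D.calculus d = D.basis * diagonal d * ((D.basis⁻¹ : (Matrix n n K)ˣ) : Matrix n n K) :=
  rfl

lemma calculus_eigenvalue : D.calculus D.eigenvalue = h := D.eq_conj.symm

lemma calculus_eigenvalue_add_natCast (t : ℕ) : D.calculus (D.eigenvalue + t) = h + t := by
  rw [map_add, map_natCast, calculus_eigenvalue]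

lemma det_calculus (d : n → K) : (D.calculus d).det = ∏ a, d a := by
  rw [calculus_apply, det_units_conj, det_diagonal]

/-- The spectral projection of `h` onto the sum of the eigenlines with index in `I`. -/
noncomputable def proj (I : Finset n) : Matrix n n K := D.calculus fun a => if a ∈ I then 1 else 0

lemma one_sub_proj (I : Finset n) :
    1 - D.proj I = D.calculus fun a => if a ∈ I then 0 else 1 := by
  rw [proj, ← map_one D.calculus, ← map_sub]
  congr 1
  ext a
  by_cases ha : a ∈ I <;> simp [ha]

lemma isIdempotentElem_proj (I : Finset n) : IsIdempotentElem (D.proj I) := by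
  rw [IsIdempotentElem, proj, ← map_mul]
  congr 1
  ext a
  by_cases ha : a ∈ I <;> simp [ha]

/-- The determinant of the compression of `u` to the range of `D.proj I`, that is, a principal
minor of `u` in an eigenbasis of `h`. -/
noncomputable def minor (u : Matrix n n K) (I : Finset n) : K :=
  (D.proj I * u * D.proj I + (1 - D.proj I)).det

lemma minor_eq_det_proj_mul_add (u : Matrix n n K) (I : Finset n) :
    D.minor u I = (D.proj I * u + (1 - D.proj I)).det := by
  have hp := (D.isIdempotentElem_proj I).eq
  calc D.minor u I = (1 + D.proj I * (u - 1) * D.proj I).det := by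
        rw [minor, mul_sub, sub_mul, mul_one, hp]
        congr 1
        abel
    _ = (D.proj I * u + (1 - D.proj I)).det := by
        rw [det_one_add_mul_comm, ← mul_assoc, hp, mul_sub, mul_one]
        congr 1
        abel

lemma minor_self (I : Finset n) : D.minor h I = ∏ a ∈ I, D.eigenvalue a := by
  have hcalc : D.proj I * h + (1 - D.proj I) =
      D.calculus fun a => if a ∈ I then D.eigenvalue a else 1 := by
    conv_lhs => rw [one_sub_proj, proj]; enter [1, 2]; rw [← D.calculus_eigenvalue]
    rw [← map_mul, ← map_add]
    congr 1
    ext a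
    by_cases ha : a ∈ I <;> simp [ha]
  rw [minor_eq_det_proj_mul_add, hcalc, det_calculus, Finset.prod_ite_mem, Finset.univ_inter]

lemma minor_one (I : Finset n) : D.minor 1 I = 1 := by
  rw [minor_eq_det_proj_mul_add, mul_one, add_sub_cancel, det_one]

end Diagonalization

lemma det_one_add_diagonal_mul (d : n → K) (u : Matrix n n K) :
    (1 + diagonal d * u).det = ∑ I : Finset n, (∏ a ∈ I, d a) *
      (diagonal (fun a => if a ∈ I then 1 else 0) * u +
        diagonal fun a => if a ∈ I then 0 else 1).det := by
  rw [add_comm]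
  refine (detRowAlternating.map_add_univ (diagonal d * u) (1 : Matrix n n K)).trans
    (Finset.sum_congr rfl fun I _ => ?_)
  have hrows : of (I.piecewise (of.symm (diagonal d * u)) (of.symm (1 : Matrix n n K))) =
      diagonal (fun a => if a ∈ I then d a else 1) *
        (diagonal (fun a => if a ∈ I then 1 else 0) * u +
          diagonal fun a => if a ∈ I then 0 else 1) := by
    ext a b
    rw [diagonal_mul, Matrix.add_apply, diagonal_mul]
    by_cases ha : a ∈ I <;> simp [Finset.piecewise, ha, diagonal_apply, one_apply]
  refine (congrArg det hrows).trans ?_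
  rw [det_mul, det_diagonal, Finset.prod_ite_mem, Finset.univ_inter]

lemma Diagonalization.det_one_add_calculus_mul (D : Diagonalization h) (d : n → K)
    (u : Matrix n n K) :
    (1 + D.calculus d * u).det = ∑ I : Finset n, (∏ a ∈ I, d a) * D.minor u I := by
  have hconj (d : n → K) : D.calculus d * u = D.basis * (diagonal d *
      (((D.basis⁻¹ : (Matrix n n K)ˣ) : Matrix n n K) * u * D.basis)) *
      ((D.basis⁻¹ : (Matrix n n K)ˣ) : Matrix n n K) := by
    simp only [calculus_apply, mul_assoc, Units.mul_inv, mul_one]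
  have hone : (1 : Matrix n n K) =
      D.basis * 1 * ((D.basis⁻¹ : (Matrix n n K)ˣ) : Matrix n n K) := by
    rw [mul_one, Units.mul_inv]
  conv_lhs => rw [hconj, hone, ← add_mul, ← mul_add, det_units_conj, det_one_add_diagonal_mul]
  refine Finset.sum_congr rfl fun I _ => ?_
  rw [minor_eq_det_proj_mul_add, one_sub_proj, proj, hconj, calculus_apply _ (fun a => _),
    ← add_mul, ← mul_add, det_units_conj]

end Diagonalization

section Transversality

variable {n : Type*} [Fintype n] [DecidableEq n] {R R' : Type*} [CommRing R] [CommRing R']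

/-- A polynomial in the entries of `h` and `u`. If `h` is diagonalizable, its vanishing detects
coincidences between the products `∏ a ∈ I, (λ a + t)` of shifted eigenvalues of `h` and vanishing
principal minors of `u` in an eigenbasis of `h`, see `Diagonalization.transversality_eq`. -/
noncomputable def transversality (t : ℕ) (h u : Matrix n n R) : R :=
  (of fun j k : Fin (Fintype.card (Finset n)) => (1 + (h + t) ^ (j + k : ℕ) * u).det).det

lemma map_transversality (f : R →+* R') (t : ℕ) (h u : Matrix n n R) :
    f (transversality t h u) = transversality t (f.mapMatrix h) (f.mapMatrix u) := by
  rw [transversality, RingHom.map_det, transversality]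
  congr 1
  ext j k
  rw [RingHom.mapMatrix_apply f (of _), map_apply, of_apply, of_apply, RingHom.map_det, map_add,
    map_mul, map_pow, map_add, map_natCast, map_one]

namespace Diagonalization

variable {K : Type*} [Field K] {h : Matrix n n K} (D : Diagonalization h)

/-- The product of the shifted eigenvalues with index in `I`. -/
def shiftedProd (t : ℕ) (I : Finset n) : K := ∏ a ∈ I, (D.eigenvalue a + t)

lemma transversality_eq (t : ℕ) (u : Matrix n n K) :
    transversality t h u =
      (vandermonde (D.shiftedProd t ∘ (Fintype.equivFin (Finset n)).symm)).det ^ 2 *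
        ∏ I, D.minor u I := by
  set e := (Fintype.equivFin (Finset n)).symm
  set V := vandermonde (D.shiftedProd t ∘ e)
  have hfactor : (of fun j k : Fin (Fintype.card (Finset n)) =>
      (1 + (h + t) ^ (j + k : ℕ) * u).det) = Vᵀ * diagonal (D.minor u ∘ e) * V := by
    ext j k
    rw [of_apply, ← D.calculus_eigenvalue_add_natCast, ← map_pow, det_one_add_calculus_mul,
      mul_apply, ← e.sum_comp]
    refine Finset.sum_congr rfl fun i _ => ?_
    simp only [mul_diagonal, transpose_apply, V, vandermonde_apply, Function.comp_apply,
      shiftedProd, Pi.pow_apply, Pi.add_apply, Pi.natCast_apply, Finset.prod_pow]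
    ring
  rw [transversality, hfactor, det_mul, det_mul, det_transpose, det_diagonal]
  simp only [Function.comp_apply, e.prod_comp]
  ring

open Polynomial in
lemma exists_injective_shiftedProd [CharZero K] (hD : Function.Injective D.eigenvalue) :
    ∃ t : ℕ, Function.Injective (D.shiftedProd t) := by
  let P (I : Finset n) : K[X] := ∏ a ∈ I, (X - C (-D.eigenvalue a))
  have heval (t : ℕ) (I : Finset n) : (P I).eval (t : K) = D.shiftedProd t I := by
    simp [P, shiftedProd, eval_prod, add_comm]
  have hP : Function.Injective P := by
    have hroots (I : Finset n) : (P I).roots = I.val.map fun a => -D.eigenvalue a := by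
      rw [roots_prod _ _ (Finset.prod_ne_zero_iff.mpr fun a _ => X_sub_C_ne_zero _)]
      simp only [roots_X_sub_C, Multiset.bind_singleton]
    intro I J hIJ
    refine Finset.val_injective (Multiset.map_injective (neg_injective.comp hD) ?_)
    exact (hroots I).symm.trans ((congrArg roots hIJ).trans (hroots J))
  let E : K[X] := ∏ z : Finset n × Finset n with z.1 ≠ z.2, (P z.1 - P z.2)
  have hE : E ≠ 0 := Finset.prod_ne_zero_iff.mpr fun z hz =>
    sub_ne_zero.mpr (hP.ne (Finset.mem_filter.mp hz).2)
  obtain ⟨t, ht⟩ : ∃ t : ℕ, E.eval (t : K) ≠ 0 := by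
    by_contra! hzero
    refine hE (eq_zero_of_infinite_isRoot _ ?_)
    exact (Set.infinite_range_of_injective (Nat.cast_injective (R := K))).mono
      (Set.range_subset_iff.mpr hzero)
  refine ⟨t, fun I J hIJ => ?_⟩
  by_contra hne
  rw [eval_prod, Finset.prod_ne_zero_iff] at ht
  exact ht (I, J) (by simpa using hne) (by rw [eval_sub, heval, heval, hIJ, sub_self])

lemma transversality_one (t : ℕ) :
    transversality t h 1 =
      (vandermonde (D.shiftedProd t ∘ (Fintype.equivFin (Finset n)).symm)).det ^ 2 := by
  simp only [D.transversality_eq, minor_one, Finset.prod_const_one, mul_one]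

lemma transversality_one_ne_zero_iff {t : ℕ} :
    transversality t h 1 ≠ 0 ↔ Function.Injective (D.shiftedProd t) := by
  rw [transversality_one, pow_ne_zero_iff two_ne_zero, det_vandermonde_ne_zero_iff]
  exact Function.Injective.of_comp_iff' _ (Equiv.bijective _)

lemma transversality_self_ne_zero {t : ℕ} (ht : Function.Injective (D.shiftedProd t))
    (hdet : h.det ≠ 0) : transversality t h h ≠ 0 := by
  have heig : ∏ a, D.eigenvalue a ≠ 0 := by rwa [← det_calculus, calculus_eigenvalue]
  rw [D.transversality_eq, ← D.transversality_one]
  refine mul_ne_zero (D.transversality_one_ne_zero_iff.mpr ht)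
    (Finset.prod_ne_zero_iff.mpr fun I _ => ?_)
  rw [minor_self]
  exact Finset.prod_ne_zero_iff.mpr fun a _ => Finset.prod_ne_zero_iff.mp heig a (by simp)

end Diagonalization

end Transversality

section CharpolyResultant

open Polynomial

variable {n : Type*} [Fintype n] [DecidableEq n] {R R' : Type*} [CommRing R] [CommRing R']

/-- The resultant of the characteristic polynomial of `h` and its derivative, with the formal
degrees made explicit so that it is compatible with every ring homomorphism. -/
noncomputable def charpolyResultant (h : Matrix n n R) : R :=
  resultant h.charpoly h.charpoly.derivative (Fintype.card n) (Fintype.card n - 1)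

lemma map_charpolyResultant (f : R →+* R') (h : Matrix n n R) :
    f (charpolyResultant h) = charpolyResultant (f.mapMatrix h) := by
  rw [charpolyResultant, charpolyResultant, RingHom.mapMatrix_apply, charpoly_map,
    derivative_map, resultant_map_map]

lemma charpolyResultant_ne_zero_iff {K : Type*} [Field K] [CharZero K] {h : Matrix n n K} :
    charpolyResultant h ≠ 0 ↔ h.charpoly.Separable := by
  have hdeg : h.charpoly.natDegree = Fintype.card n := charpoly_natDegree_eq_dim h
  have hdeg' : h.charpoly.derivative.natDegree = Fintype.card n - 1 := by
    rw [natDegree_derivative, hdeg]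
  rw [← isUnit_iff_ne_zero, charpolyResultant, ← hdeg', ← hdeg,
    isUnit_resultant_iff_isCoprime h.charpoly_monic, Polynomial.Separable]

end CharpolyResultant

/-! ### Tempered families -/

section Tempered

variable {σ : Type*} {T : σ → ℝ}

/-- The family `f` is polynomially bounded in the scale `T`. Raising the scale to at least `2`
absorbs all constant factors into the exponent. -/
def Tempered {E : Type*} [Norm E] (T : σ → ℝ) (f : σ → E) : Prop :=
  ∃ c : ℕ, ∀ s, ‖f s‖ ≤ max 2 (T s) ^ c

lemma two_max_pow_le_pow {c c' : ℕ} (h : c ≤ c') (s : σ) :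
    max 2 (T s) ^ c ≤ max 2 (T s) ^ c' :=
  pow_le_pow_right₀ (one_le_two.trans (le_max_left _ _)) h

namespace Tempered

lemma const {E : Type*} [Norm E] (x : E) : Tempered T fun _ => x := by
  obtain ⟨c, hc⟩ := pow_unbounded_of_one_lt ‖x‖ one_lt_two
  exact ⟨c, fun s => hc.le.trans (pow_le_pow_left₀ zero_le_two (le_max_left _ _) c)⟩

lemma scale : Tempered T fun s => max 2 (T s) :=
  ⟨1, fun s => by rw [pow_one, Real.norm_of_nonneg (zero_le_two.trans (le_max_left _ _))]⟩

lemma mono {E F : Type*} [Norm E] [Norm F] {f : σ → E} {g : σ → F} (hg : Tempered T g)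
    (h : ∀ s, ‖f s‖ ≤ ‖g s‖) : Tempered T f :=
  hg.imp fun _ hc s => (h s).trans (hc s)

section Group

variable {E : Type*} [SeminormedAddCommGroup E] {f g : σ → E}

lemma norm (hf : Tempered T f) : Tempered T fun s => ‖f s‖ :=
  hf.mono fun _ => (norm_norm _).le

lemma add (hf : Tempered T f) (hg : Tempered T g) : Tempered T fun s => f s + g s := by
  obtain ⟨c, hc⟩ := hf
  obtain ⟨c', hc'⟩ := hg
  refine ⟨1 + (c + c'), fun s => (norm_add_le _ _).trans ?_⟩
  have hf' := (hc s).trans (two_max_pow_le_pow (Nat.le_add_right c c') s)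
  have hg' := (hc' s).trans (two_max_pow_le_pow (Nat.le_add_left c' c) s)
  calc ‖f s‖ + ‖g s‖ ≤ 2 * max 2 (T s) ^ (c + c') := by linarith
    _ ≤ max 2 (T s) * max 2 (T s) ^ (c + c') := by gcongr; exact le_max_left _ _
    _ = max 2 (T s) ^ (1 + (c + c')) := by rw [pow_add _ 1, pow_one]

lemma neg (hf : Tempered T f) : Tempered T fun s => -f s :=
  hf.mono fun _ => (norm_neg _).le

lemma sub (hf : Tempered T f) (hg : Tempered T g) : Tempered T fun s => f s - g s := by
  simpa only [sub_eq_add_neg] using hf.add hg.neg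

lemma sum {ι : Type*} {f : ι → σ → E} (t : Finset ι) (hf : ∀ i ∈ t, Tempered T (f i)) :
    Tempered T fun s => ∑ i ∈ t, f i s := by
  classical
  induction t using Finset.induction_on with
  | empty => simpa only [Finset.sum_empty] using const 0
  | insert i t hi ih =>
    simp only [Finset.sum_insert hi]
    exact (hf i (by simp)).add (ih fun j hj => hf j (by simp [hj]))

lemma pi {ι : Type*} [Fintype ι] {f : σ → ι → E} (hf : ∀ i, Tempered T fun s => f s i) :
    Tempered T f := by
  refine (sum Finset.univ fun i _ => (hf i).norm).mono fun s => ?_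
  rw [Real.norm_of_nonneg (Finset.sum_nonneg fun i _ => norm_nonneg _)]
  exact (pi_norm_le_iff_of_nonneg (Finset.sum_nonneg fun i _ => norm_nonneg _)).mpr fun i =>
    Finset.single_le_sum (f := fun i => ‖f s i‖) (fun i _ => norm_nonneg _) (Finset.mem_univ i)

lemma apply {ι : Type*} [Fintype ι] {f : σ → ι → E} (hf : Tempered T f) (i : ι) :
    Tempered T fun s => f s i :=
  hf.mono fun s => norm_le_pi_norm (f s) i

lemma comp_finite {ι : Type*} [Finite ι] {f : ι → σ → E} (hf : ∀ i, Tempered T (f i))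
    (i : σ → ι) : Tempered T fun s => f (i s) s := by
  have := Fintype.ofFinite ι
  exact (pi hf).mono fun s => norm_le_pi_norm (fun j => f j s) (i s)

lemma smul {𝕜 : Type*} [SeminormedRing 𝕜] [Module 𝕜 E] [IsBoundedSMul 𝕜 E] {a : σ → 𝕜}
    (ha : Tempered T a) (hf : Tempered T f) : Tempered T fun s => a s • f s := by
  obtain ⟨c, hc⟩ := ha
  obtain ⟨c', hc'⟩ := hf
  refine ⟨c + c', fun s => (norm_smul_le _ _).trans ?_⟩
  rw [pow_add]
  exact mul_le_mul (hc s) (hc' s) (norm_nonneg _) (by positivity)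

end Group

section Ring

variable {A : Type*} [SeminormedRing A] {f g : σ → A}

lemma mul (hf : Tempered T f) (hg : Tempered T g) : Tempered T fun s => f s * g s :=
  hf.smul hg

lemma pow (hf : Tempered T f) (k : ℕ) : Tempered T fun s => f s ^ k := by
  induction k with
  | zero => simpa only [pow_zero] using const 1
  | succ k ih => simpa only [pow_succ] using ih.mul hf

end Ring

lemma prod {ι A : Type*} [SeminormedCommRing A] {f : ι → σ → A} (t : Finset ι)
    (hf : ∀ i ∈ t, Tempered T (f i)) : Tempered T fun s => ∏ i ∈ t, f i s := by
  classical
  induction t using Finset.induction_on with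
  | empty => simpa only [Finset.prod_empty] using const 1
  | insert i t hi ih =>
    simp only [Finset.prod_insert hi]
    exact (hf i (by simp)).mul (ih fun j hj => hf j (by simp [hj]))

section Field

variable {K : Type*} [NormedField K]

lemma of_pow {f : σ → K} {k : ℕ} (hk : k ≠ 0) (hf : Tempered T fun s => f s ^ k) :
    Tempered T f := by
  refine ((const (1 : ℝ)).add hf.norm).mono fun s => ?_
  rw [Real.norm_of_nonneg (by positivity), norm_pow]
  rcases le_total ‖f s‖ 1 with h | h
  · exact h.trans (le_add_of_nonneg_right (by positivity))
  · exact (le_self_pow₀ h hk).trans (le_add_of_nonneg_left zero_le_one)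

lemma inv_of_one_le {f : σ → K} (hf : ∀ s, 1 ≤ ‖f s‖) : Tempered T fun s => (f s)⁻¹ :=
  (const (1 : ℝ)).mono fun s => by
    rw [norm_inv, norm_one]
    exact inv_le_one_of_one_le₀ (hf s)

lemma inv_of_prod {ι : Type*} {f : ι → σ → K} {t : Finset ι} (hf : ∀ i ∈ t, Tempered T (f i))
    (hne : ∀ s, ∏ i ∈ t, f i s ≠ 0) (hinv : Tempered T fun s => (∏ i ∈ t, f i s)⁻¹) {i : ι}
    (hi : i ∈ t) : Tempered T fun s => (f i s)⁻¹ := by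
  classical
  have hcancel (s : σ) : (f i s)⁻¹ = (∏ j ∈ t, f j s)⁻¹ * ∏ j ∈ t.erase i, f j s := by
    have h := hne s
    rw [← Finset.mul_prod_erase t (fun j => f j s) hi] at h ⊢
    rw [mul_inv, mul_assoc, inv_mul_cancel₀ (right_ne_zero_of_mul h), mul_one]
  simpa only [hcancel] using
    hinv.mul (prod (t.erase i) fun j hj => hf j (Finset.mem_of_mem_erase hj))

end Field

section Matrix

attribute [local instance] Matrix.linftyOpNormedRing Matrix.linftyOpNormedAlgebra

variable {κ : Type*} [Fintype κ] [DecidableEq κ] {A : σ → Matrix κ κ ℂ}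

lemma of_entries (hA : ∀ i j, Tempered T fun s => A s i j) : Tempered T A := by
  refine Tempered.mono (g := fun s => ∑ i, ∑ j, ‖A s i j‖)
    (sum _ fun i _ => sum _ fun j _ => (hA i j).norm) fun s => ?_
  rw [linfty_opNorm_def, Real.norm_of_nonneg (by positivity)]
  have hle : (Finset.univ.sup fun i => ∑ j, ‖A s i j‖₊) ≤ ∑ i, ∑ j, ‖A s i j‖₊ :=
    Finset.sup_le fun i _ => Finset.single_le_sum (f := fun i => ∑ j, ‖A s i j‖₊)
      (fun _ _ => zero_le) (Finset.mem_univ i)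
  exact (NNReal.coe_le_coe.mpr hle).trans_eq (by simp)

lemma entry (hA : Tempered T A) (i j : κ) : Tempered T fun s => A s i j := by
  refine hA.mono fun s => ?_
  rw [linfty_opNorm_def]
  exact (Finset.single_le_sum (f := fun j => ‖A s i j‖₊) (fun _ _ => zero_le)
    (Finset.mem_univ j)).trans
    (Finset.le_sup (f := fun i => ∑ j, ‖A s i j‖₊) (Finset.mem_univ i))

lemma det (hA : Tempered T A) : Tempered T fun s => (A s).det := by
  simp only [det_apply]
  refine sum _ fun π _ => ?_
  simp only [Units.smul_def, ← Int.cast_smul_eq_zsmul ℂ]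
  exact (const _).smul (prod _ fun i _ => hA.entry _ _)

lemma adjugate (hA : Tempered T A) : Tempered T fun s => (A s).adjugate := by
  refine of_entries fun i j => ?_
  simp only [adjugate_apply]
  refine det (of_entries fun k l => ?_)
  by_cases hk : k = j
  · simpa only [hk, updateRow_self] using const ((Pi.single i 1 : κ → ℂ) l)
  · simpa only [updateRow_ne hk] using hA.entry k l

lemma matrix_inv (hA : Tempered T A) (hdet : Tempered T fun s => (A s).det⁻¹) :
    Tempered T fun s => (A s)⁻¹ := by
  simp only [inv_def, Ring.inverse_eq_inv']
  exact hdet.smul hA.adjugate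

lemma mulVec (hA : Tempered T A) {v : σ → κ → ℂ} (hv : Tempered T v) :
    Tempered T fun s => A s *ᵥ v s :=
  (hA.norm.mul hv.norm).mono fun s => by
    rw [Real.norm_of_nonneg (by positivity)]
    exact linfty_opNorm_mulVec _ _

end Matrix

end Tempered

end Tempered

section Spectrum

variable {n κ : Type*} [Fintype n] [DecidableEq n] [Fintype κ] [DecidableEq κ]

lemma exists_mem_spectrum_norm_trace_le [Nonempty n] (x : Matrix n n ℂ) :
    ∃ ν ∈ spectrum ℂ x, ‖x.trace‖ ≤ Fintype.card n * ‖ν‖ := by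
  have hcard : x.charpoly.roots.card = Fintype.card n := by
    rw [← (IsAlgClosed.splits x.charpoly).natDegree_eq_card_roots, charpoly_natDegree_eq_dim]
  by_contra! hlt
  have hsum : (x.charpoly.roots.map fun ν => Fintype.card n * ‖ν‖).sum <
      (x.charpoly.roots.map fun _ => ‖x.trace‖).sum := by
    refine Multiset.sum_lt_sum_of_nonempty ?_ fun ν hν => hlt ν ?_
    · exact Multiset.card_pos.mp (hcard ▸ Fintype.card_pos)
    · exact mem_spectrum_iff_isRoot_charpoly.mpr (Polynomial.isRoot_of_mem_roots hν)
  rw [Multiset.sum_map_mul_left, Multiset.map_const', Multiset.sum_replicate, hcard,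
    nsmul_eq_mul] at hsum
  refine (lt_of_mul_lt_mul_left hsum (Nat.cast_nonneg _)).not_ge ?_
  rw [trace_eq_sum_roots_charpoly]
  exact norm_multiset_sum_le _

open scoped Kronecker in
lemma det_leftMulMatrix {K : Type*} [Field K] (b : Module.Basis κ K (Matrix n n K))
    (x : Matrix n n K) : (Algebra.leftMulMatrix b x).det = x.det ^ Fintype.card n := by
  have hkronecker : Algebra.leftMulMatrix (stdBasis K n n) x = x ⊗ₖ (1 : Matrix n n K) := by
    ext ⟨i, j⟩ ⟨k, l⟩
    rw [Algebra.leftMulMatrix_eq_repr_mul, stdBasis_eq_single, kroneckerMap_apply]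
    rcases eq_or_ne l j with rfl | hlj <;>
      simp_all [stdBasis, mul_apply, single_apply, one_apply, Ne.symm]
  rw [← Algebra.norm_eq_matrix_det, Algebra.norm_eq_matrix_det (stdBasis K n n), hkronecker,
    det_kronecker, det_one, one_pow, mul_one]

attribute [local instance] Matrix.linftyOpNormedRing Matrix.linftyOpNormedAlgebra

lemma norm_le_norm_leftMulMatrix_of_mem_spectrum
    (b : Module.Basis κ ℂ (Matrix n n ℂ)) {x : Matrix n n ℂ} {ν : ℂ} (hν : ν ∈ spectrum ℂ x) :
    ‖ν‖ ≤ ‖Algebra.leftMulMatrix b x‖ := by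
  rcases isEmpty_or_nonempty n with _ | _
  · simp [spectrum.of_subsingleton] at hν
  · have : Nonempty κ := b.index_nonempty
    have : NormOneClass (Matrix κ κ ℂ) := linfty_opNormOneClass
    refine spectrum.norm_le_norm_of_mem ?_
    rw [spectrum.mem_iff, isUnit_iff_isUnit_det, isUnit_iff_ne_zero, not_not] at hν ⊢
    rw [← AlgHom.commutes (Algebra.leftMulMatrix b), ← map_sub, det_leftMulMatrix, hν,
      zero_pow Fintype.card_ne_zero]

end Spectrum

namespace Diagonalization

variable {n : Type*} [Fintype n] [DecidableEq n] {K : Type*} [Field K] {h : Matrix n n K}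
  (D : Diagonalization h)

lemma spectrum_eq_range : spectrum K h = Set.range D.eigenvalue := by
  ext ν
  have hsub : algebraMap K (Matrix n n K) ν - h = D.calculus (algebraMap K (n → K) ν -
      D.eigenvalue) := by
    rw [map_sub, AlgHom.commutes, calculus_eigenvalue]
  rw [spectrum.mem_iff, isUnit_iff_isUnit_det, isUnit_iff_ne_zero, not_not, hsub, det_calculus,
    Finset.prod_eq_zero_iff]
  simp [sub_eq_zero, @eq_comm _ ν]

lemma calculus_eq_sum (d : n → K) : D.calculus d = ∑ a, d a • D.proj {a} := by
  simp only [proj, ← map_smul, ← map_sum]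
  congr 1
  ext a
  simp

lemma proj_eq_sum (I : Finset n) : D.proj I = ∑ a ∈ I, D.proj {a} := by
  rw [proj, calculus_eq_sum]
  simp

lemma calculus_injective : Function.Injective D.calculus :=
  (MulSemiringAction.toAlgEquiv K (Matrix n n K) (ConjAct.toConjAct D.basis)).injective.comp
    diagonal_injective

lemma proj_ne_zero {I : Finset n} (hI : I.Nonempty) : D.proj I ≠ 0 := by
  obtain ⟨a, ha⟩ := hI
  rw [proj, Ne, map_eq_zero_iff _ D.calculus_injective]
  exact fun h0 => by simpa [ha] using congrFun h0 a

lemma proj_ne_one {I : Finset n} (hI : I ≠ Finset.univ) : D.proj I ≠ 1 := by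
  obtain ⟨a, ha⟩ : ∃ a, a ∉ I := by simpa [Finset.eq_univ_iff_forall] using hI
  rw [proj, Ne, map_eq_one_iff _ D.calculus_injective]
  exact fun h1 => by simpa [ha] using congrFun h1 a

lemma proj_singleton_eq_prod (hD : Function.Injective D.eigenvalue) (a : n) :
    D.proj {a} = D.calculus (∏ c ∈ Finset.univ.erase a, (D.eigenvalue a - D.eigenvalue c)⁻¹ •
      (D.eigenvalue - algebraMap K (n → K) (D.eigenvalue c))) := by
  rw [proj]
  congr 1
  ext b
  rw [Finset.prod_apply]
  rcases eq_or_ne b a with rfl | hba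
  · rw [if_pos (Finset.mem_singleton_self b)]
    refine (Finset.prod_eq_one fun c hc => ?_).symm
    exact inv_mul_cancel₀ (sub_ne_zero.mpr (hD.ne (Finset.ne_of_mem_erase hc).symm))
  · rw [if_neg (mt Finset.mem_singleton.mp hba)]
    refine (Finset.prod_eq_zero (Finset.mem_erase.mpr ⟨hba, Finset.mem_univ b⟩) ?_).symm
    simp

lemma norm_calculus_mul_norm_calculus_le {h : Matrix n n ℂ} (D : Diagonalization h) {B : Type*}
    [NormedRing B] [NormedAlgebra ℂ B] (F : Matrix n n ℂ →ₐ[ℂ] B) {d e : n → ℂ} {ε : ℝ}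
    (hde : ∀ a b, ‖d a‖ * ‖e b‖ ≤ ε) :
    ‖F (D.calculus d)‖ * ‖F (D.calculus e)‖ ≤ ε * (∑ a, ‖F (D.proj {a})‖) ^ 2 := by
  have hle (d : n → ℂ) : ‖F (D.calculus d)‖ ≤ ∑ a, ‖d a‖ * ‖F (D.proj {a})‖ := by
    rw [calculus_eq_sum, map_sum]
    refine norm_sum_le_of_le _ fun a _ => ?_
    rw [map_smul]
    exact norm_smul_le _ _
  calc _ ≤ (∑ a, ‖d a‖ * ‖F (D.proj {a})‖) * ∑ b, ‖e b‖ * ‖F (D.proj {b})‖ :=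
        mul_le_mul (hle d) (hle e) (norm_nonneg _) (by positivity)
    _ = ∑ a, ∑ b, ‖d a‖ * ‖e b‖ * (‖F (D.proj {a})‖ * ‖F (D.proj {b})‖) := by
        rw [Finset.sum_mul_sum]
        exact Finset.sum_congr rfl fun a _ => Finset.sum_congr rfl fun b _ => by ring
    _ ≤ ∑ a, ∑ b, ε * (‖F (D.proj {a})‖ * ‖F (D.proj {b})‖) := by
        gcongr with a _ b _
        exact hde a b
    _ = ε * (∑ a, ‖F (D.proj {a})‖) ^ 2 := by
        simp only [sq, Finset.sum_mul_sum, ← Finset.mul_sum]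

end Diagonalization

section Gap

variable {n : Type*} [Fintype n]

lemma exists_eq_succ_of_monotone {I : ℕ → Finset n} (hI : Monotone I) (hne : (I 0).Nonempty) :
    ∃ k, k < Fintype.card n ∧ I k = I (k + 1) := by
  by_contra! hstrict
  have hcard (k : ℕ) (hk : k ≤ Fintype.card n) : k < (I k).card := by
    induction k with
    | zero => exact Finset.card_pos.mpr hne
    | succ k ih =>
      exact (Nat.succ_le_of_lt (ih (by omega))).trans_lt
        (Finset.card_lt_card ((hI k.le_succ).ssubset_of_ne (hstrict k hk)))
  exact (hcard _ le_rfl).not_ge (Finset.card_le_univ _)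

-- Two consecutive sets in the increasing sequence `{a | T ^ N ≤ f a ^ N * T ^ k}`, `k ≤ N`,
-- coincide; such a set has the gap, and the product being `1` prevents it from containing all
-- indices.
lemma exists_finset_gap {T : ℝ} (hT : 1 < T) {f : n → ℝ} (hf : ∀ a, 0 < f a) (hprod : ∏ a, f a = 1)
    {a₀ : n} (ha₀ : T ≤ f a₀) :
    ∃ I : Finset n, I.Nonempty ∧ I ≠ Finset.univ ∧ ∀ a ∈ I, ∀ b ∉ I,
      f b ^ Fintype.card n * T ≤ f a ^ Fintype.card n := by
  classical
  set N := Fintype.card n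
  have hT0 : 0 < T := one_pos.trans hT
  let I (k : ℕ) : Finset n := {a | T ^ N ≤ f a ^ N * T ^ k}
  have hmem {k : ℕ} {a : n} : a ∈ I k ↔ T ^ N ≤ f a ^ N * T ^ k := by simp [I]
  have hmono : Monotone I := fun k l hkl a ha => hmem.mpr <| (hmem.mp ha).trans <|
    mul_le_mul_of_nonneg_left (pow_le_pow_right₀ hT.le hkl) (pow_nonneg (hf a).le N)
  have hne : (I 0).Nonempty := ⟨a₀, hmem.mpr (by simpa using pow_le_pow_left₀ hT0.le ha₀ N)⟩
  obtain ⟨k, hk, hIk⟩ := exists_eq_succ_of_monotone hmono hne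
  refine ⟨I k, hne.mono (hmono k.zero_le), fun huniv => ?_, fun a ha b hb => ?_⟩
  · have hone (a : n) : 1 ≤ f a := by
      have ha : a ∈ I N := hmono hk.le (huniv ▸ Finset.mem_univ a)
      rw [hmem, le_mul_iff_one_le_left (by positivity)] at ha
      exact (one_le_pow_iff_of_nonneg (hf a).le hk.ne_bot).mp ha
    refine hprod.not_gt ?_
    calc 1 = ∏ _a : n, (1 : ℝ) := Finset.prod_const_one.symm
      _ < ∏ a, f a := Finset.prod_lt_prod (fun _ _ => one_pos) (fun a _ => hone a)
        ⟨a₀, Finset.mem_univ a₀, hT.trans_le ha₀⟩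
  · rw [hIk, hmem, not_le] at hb
    refine le_of_mul_le_mul_right ?_ (pow_pos hT0 k)
    calc f b ^ N * T * T ^ k = f b ^ N * T ^ (k + 1) := by ring
      _ ≤ f a ^ N * T ^ k := hb.le.trans (hmem.mp ha)

end Gap

section Tempered

variable {σ : Type*} {T : σ → ℝ}

lemma Tempered.map_prod {ι M A : Type*} [CommMonoid M] [SeminormedRing A] {F : σ → M →* A}
    {d : ι → σ → M} (t : Finset ι) (hd : ∀ i ∈ t, Tempered T fun s => F s (d i s)) :
    Tempered T fun s => F s (∏ i ∈ t, d i s) := by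
  classical
  induction t using Finset.induction_on with
  | empty => simpa only [Finset.prod_empty, map_one] using const 1
  | insert i t hi ih =>
    simp only [Finset.prod_insert hi, map_mul]
    exact (hd i (by simp)).mul (ih fun j hj => hd j (by simp [hj]))

lemma Tempered.inv_sub_of_vandermonde {K : Type*} [NormedField K] {N : ℕ} {v : Fin N → σ → K}
    (hv : ∀ i, Tempered T (v i)) (hdet : ∀ s, 1 ≤ ‖(vandermonde fun i => v i s).det‖)
    {i j : Fin N} (hij : i ≠ j) : Tempered T fun s => (v i s - v j s)⁻¹ := by
  have hne (s : σ) : (vandermonde fun i => v i s).det ≠ 0 :=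
    norm_pos_iff.mp (one_pos.trans_le (hdet s))
  have hinv := inv_of_one_le (T := T) hdet
  simp only [det_vandermonde] at hne hinv
  have hlt {i j : Fin N} (hij : i < j) : Tempered T fun s => (v j s - v i s)⁻¹ := by
    have hrow := inv_of_prod (fun i _ => prod (Finset.Ioi i) fun j _ => (hv j).sub (hv i)) hne hinv
      (Finset.mem_univ i)
    exact inv_of_prod (fun j _ => (hv j).sub (hv i))
      (fun s => Finset.prod_ne_zero_iff.mp (hne s) i (Finset.mem_univ i)) hrow
      (Finset.mem_Ioi.mpr hij)
  rcases hij.lt_or_gt with h | h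
  · simpa only [← inv_neg, neg_sub] using (hlt h).neg
  · exact hlt h

end Tempered

section TransverseFamily

attribute [local instance] Matrix.linftyOpNormedRing Matrix.linftyOpNormedAlgebra

variable {σ n κ : Type*} [Fintype n] [DecidableEq n] [Fintype κ] [DecidableEq κ]
  {T : σ → ℝ} {t : ℕ} {b : σ → Module.Basis κ ℂ (Matrix n n ℂ)} {h : σ → Matrix n n ℂ}

/-- Matrices `h s` and bases `b s` of the matrix algebra such that, in the coordinates of `b s`,
everything is polynomially bounded in the scale `T s`, and the elements of `b s` are in general
position with respect to `h s` in a quantitative sense. -/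
structure TransverseFamily (T : σ → ℝ) (t : ℕ) (b : σ → Module.Basis κ ℂ (Matrix n n ℂ))
    (h : σ → Matrix n n ℂ) : Prop where
  leftMulMatrix : Tempered T fun s => Algebra.leftMulMatrix (b s) (h s)
  leftMulMatrix_basis (i : κ) : Tempered T fun s => Algebra.leftMulMatrix (b s) (b s i)
  equivFun_one : Tempered T fun s => (b s).equivFun 1
  one_le_norm_transversality_one (s : σ) : 1 ≤ ‖transversality t (h s) 1‖
  one_le_norm_transversality (s : σ) (i : κ) : 1 ≤ ‖transversality t (h s) (b s i)‖

namespace TransverseFamily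

lemma eigenvalue (hF : TransverseFamily T t b h) (D : ∀ s, Diagonalization (h s)) (a : n) :
    Tempered T fun s => (D s).eigenvalue a :=
  hF.leftMulMatrix.mono fun s => norm_le_norm_leftMulMatrix_of_mem_spectrum (b s)
    ((D s).spectrum_eq_range ▸ Set.mem_range_self a)

lemma shiftedProd (hF : TransverseFamily T t b h) (D : ∀ s, Diagonalization (h s)) (I : Finset n) :
    Tempered T fun s => (D s).shiftedProd t I :=
  Tempered.prod I fun a _ => (hF.eigenvalue D a).add (Tempered.const _)

lemma injective_eigenvalue (hF : TransverseFamily T t b h) (D : ∀ s, Diagonalization (h s))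
    (s : σ) : Function.Injective (D s).eigenvalue := by
  intro a c hac
  refine Finset.singleton_injective ((D s).transversality_one_ne_zero_iff.mp
    (norm_pos_iff.mp (one_pos.trans_le (hF.one_le_norm_transversality_one s))) ?_)
  simp only [Diagonalization.shiftedProd, Finset.prod_singleton, hac]

lemma inv_eigenvalue_sub (hF : TransverseFamily T t b h) (D : ∀ s, Diagonalization (h s))
    {a c : n} (hac : a ≠ c) :
    Tempered T fun s => ((D s).eigenvalue a - (D s).eigenvalue c)⁻¹ := by
  set e := Fintype.equivFin (Finset n)
  have hdet (s : σ) : 1 ≤ ‖(vandermonde fun i => (D s).shiftedProd t (e.symm i)).det‖ := by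
    rw [← one_le_sq_iff₀ (norm_nonneg _), ← norm_pow]
    exact (hF.one_le_norm_transversality_one s).trans_eq (congrArg _ ((D s).transversality_one t))
  have := Tempered.inv_sub_of_vandermonde (fun i => hF.shiftedProd D (e.symm i)) hdet
    (e.injective.ne (Finset.singleton_injective.ne hac))
  simpa only [e.symm_apply_apply, Diagonalization.shiftedProd, Finset.prod_singleton,
    add_sub_add_right_eq_sub] using this

lemma leftMulMatrix_proj (hF : TransverseFamily T t b h) (D : ∀ s, Diagonalization (h s))
    (I : Finset n) : Tempered T fun s => Algebra.leftMulMatrix (b s) ((D s).proj I) := by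
  simp only [Diagonalization.proj_eq_sum _ I, map_sum]
  refine Tempered.sum I fun a _ => ?_
  simp only [fun s => (D s).proj_singleton_eq_prod (hF.injective_eigenvalue D s) a]
  refine Tempered.map_prod
    (F := fun s => ((Algebra.leftMulMatrix (b s)).comp (D s).calculus : (n → ℂ) →* Matrix κ κ ℂ))
    _ fun c hc => ?_
  simp only [MonoidHom.coe_coe, AlgHom.comp_apply, map_smul, map_sub,
    Diagonalization.calculus_eigenvalue, Algebra.algebraMap_eq_smul_one, map_one]
  exact (hF.inv_eigenvalue_sub D (Finset.ne_of_mem_erase hc).symm).smul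
    (hF.leftMulMatrix.sub ((hF.eigenvalue D c).smul (Tempered.const 1)))

lemma leftMulMatrix_one_sub_proj (hF : TransverseFamily T t b h) (D : ∀ s, Diagonalization (h s))
    (I : Finset n) : Tempered T fun s => Algebra.leftMulMatrix (b s) (1 - (D s).proj I) := by
  simpa only [map_sub, map_one] using (Tempered.const 1).sub (hF.leftMulMatrix_proj D I)

lemma leftMulMatrix_compression (hF : TransverseFamily T t b h) (D : ∀ s, Diagonalization (h s))
    (i : κ) (I : Finset n) : Tempered T fun s => Algebra.leftMulMatrix (b s)
      ((D s).proj I * b s i * (D s).proj I + (1 - (D s).proj I)) := by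
  simp only [map_add, map_mul]
  exact (((hF.leftMulMatrix_proj D I).mul (hF.leftMulMatrix_basis i)).mul
    (hF.leftMulMatrix_proj D I)).add (hF.leftMulMatrix_one_sub_proj D I)

lemma minor_ne_zero (hF : TransverseFamily T t b h) (D : ∀ s, Diagonalization (h s)) (i : κ)
    (I : Finset n) (s : σ) : (D s).minor (b s i) I ≠ 0 := by
  have := norm_pos_iff.mp (one_pos.trans_le (hF.one_le_norm_transversality s i))
  rw [(D s).transversality_eq] at this
  exact Finset.prod_ne_zero_iff.mp (right_ne_zero_of_mul this) I (Finset.mem_univ I)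

lemma minor (hF : TransverseFamily T t b h) (D : ∀ s, Diagonalization (h s)) (i : κ)
    (I : Finset n) : Tempered T fun s => (D s).minor (b s i) I := by
  rcases isEmpty_or_nonempty n with _ | _
  · simpa only [Diagonalization.minor, det_isEmpty] using Tempered.const 1
  · refine Tempered.of_pow (Fintype.card_ne_zero (α := n)) ?_
    simpa only [Diagonalization.minor, det_leftMulMatrix] using
      (hF.leftMulMatrix_compression D i I).det

lemma transversality_one (hF : TransverseFamily T t b h) (D : ∀ s, Diagonalization (h s)) :
    Tempered T fun s => transversality t (h s) 1 := by
  simp only [fun s => (D s).transversality_one t]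
  refine (Tempered.det (Tempered.of_entries fun i j => ?_)).pow 2
  exact (hF.shiftedProd D _).pow j

lemma inv_minor (hF : TransverseFamily T t b h) (D : ∀ s, Diagonalization (h s)) (i : κ)
    (I : Finset n) : Tempered T fun s => ((D s).minor (b s i) I)⁻¹ := by
  have hprod (s : σ) : (∏ J, (D s).minor (b s i) J)⁻¹ =
      transversality t (h s) 1 * (transversality t (h s) (b s i))⁻¹ := by
    have hone : transversality t (h s) 1 ≠ 0 :=
      norm_pos_iff.mp (one_pos.trans_le (hF.one_le_norm_transversality_one s))
    rw [(D s).transversality_eq t (b s i), ← (D s).transversality_one, mul_inv,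
      mul_inv_cancel_left₀ hone]
  refine Tempered.inv_of_prod (fun J _ => hF.minor D i J)
    (fun s => Finset.prod_ne_zero_iff.mpr fun J _ => hF.minor_ne_zero D i J s) ?_
    (Finset.mem_univ I)
  simp only [hprod]
  exact (hF.transversality_one D).mul
    (Tempered.inv_of_one_le fun s => hF.one_le_norm_transversality s i)

lemma inv_leftMulMatrix_compression (hF : TransverseFamily T t b h)
    (D : ∀ s, Diagonalization (h s)) (i : κ) (I : Finset n) :
    Tempered T fun s => (Algebra.leftMulMatrix (b s)
      ((D s).proj I * b s i * (D s).proj I + (1 - (D s).proj I)))⁻¹ := by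
  refine (hF.leftMulMatrix_compression D i I).matrix_inv ?_
  simp only [det_leftMulMatrix, ← inv_pow]
  exact (hF.inv_minor D i I).pow _

end TransverseFamily

end TransverseFamily

section Coordinates

attribute [local instance] Matrix.linftyOpNormedRing Matrix.linftyOpNormedAlgebra

variable {n κ : Type*} [Fintype n] [Fintype κ]

lemma norm_equivFun_le [DecidableEq n] [DecidableEq κ] (b : Module.Basis κ ℂ (Matrix n n ℂ))
    (x : Matrix n n ℂ) :
    ‖b.equivFun x‖ ≤ ‖Algebra.leftMulMatrix b x‖ * ‖b.equivFun 1‖ := by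
  have hx : b.equivFun x = Algebra.leftMulMatrix b x *ᵥ b.equivFun 1 := by
    simp only [Module.Basis.equivFun_apply, Algebra.leftMulMatrix_mulVec_repr, mul_one]
  exact hx ▸ linfty_opNorm_mulVec _ _

lemma exists_one_le_card_mul_norm_equivFun {V : Type*} [AddCommGroup V]
    [Module ℂ V] (b : Module.Basis κ ℂ V) {E : V →ₗ[ℂ] V} (hE : IsIdempotentElem E)
    (hE0 : E ≠ 0) : ∃ i, 1 ≤ Fintype.card κ * ‖b.equivFun (E (b i))‖ := by
  classical
  set M : Matrix κ κ ℂ := LinearMap.toMatrix b b E with hMdef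
  have hM : 0 < ‖M‖ := norm_pos_iff.mpr ((LinearMap.toMatrix b b).map_ne_zero_iff.mpr hE0)
  have hMM : M * M = M := by rw [← LinearMap.toMatrix_mul, hE.eq]
  have hone : 1 ≤ ‖M‖ := one_le_of_le_mul_left₀ hM ((congrArg norm hMM).ge.trans (norm_mul_le M M))
  by_contra! hlt
  refine hone.not_gt ?_
  rw [linfty_opNorm_def, ← NNReal.coe_one, NNReal.coe_lt_coe, Finset.sup_lt_iff one_pos]
  intro k _
  rw [← NNReal.coe_lt_coe, NNReal.coe_sum]
  have : Nonempty κ := ⟨k⟩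
  have hcard : (0 : ℝ) < Fintype.card κ := Nat.cast_pos.mpr Fintype.card_pos
  calc ∑ i, ‖M k i‖ < ∑ _i : κ, (Fintype.card κ : ℝ)⁻¹ := by
        refine Finset.sum_lt_sum_of_nonempty Finset.univ_nonempty fun i _ => ?_
        rw [← one_div, lt_div_iff₀' hcard, hMdef, LinearMap.toMatrix_apply]
        exact (mul_le_mul_of_nonneg_left (norm_le_pi_norm (b.equivFun (E (b i))) k)
          hcard.le).trans_lt (hlt i)
    _ = 1 := by simp [hcard.ne']

end Coordinates

section Coordinates

variable {n κ : Type*} [Fintype n] [Fintype κ]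

lemma exists_mul_single_mul_ne_zero [DecidableEq n] {x y : Matrix n n ℂ} (hx : x ≠ 0) (hy : y ≠ 0) :
    ∃ j k, x * single j k 1 * y ≠ 0 := by
  obtain ⟨i, j, hij⟩ : ∃ i j, x i j ≠ 0 := by simpa [← Matrix.ext_iff] using hx
  obtain ⟨k, l, hkl⟩ : ∃ k l, y k l ≠ 0 := by simpa [← Matrix.ext_iff] using hy
  refine ⟨j, k, fun h0 => mul_ne_zero hij hkl ?_⟩
  simpa [mul_apply, single_apply, ite_and, mul_assoc] using congrFun (congrFun h0 i) l

lemma exists_one_le_card_mul_norm_equivFun_mul_mul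
    (b : Module.Basis κ ℂ (Matrix n n ℂ)) {x y : Matrix n n ℂ} (hx : IsIdempotentElem x)
    (hy : IsIdempotentElem y) (hx0 : x ≠ 0) (hy0 : y ≠ 0) :
    ∃ i, 1 ≤ Fintype.card κ * ‖b.equivFun (x * b i * y)‖ := by
  classical
  obtain ⟨j, k, hjk⟩ := exists_mul_single_mul_ne_zero hx0 hy0
  have hE : IsIdempotentElem (LinearMap.mulLeftRight ℂ (x, y)) := LinearMap.ext fun z => by
    simp only [Module.End.mul_apply, LinearMap.mulLeftRight_apply, mul_assoc, hy.eq]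
    rw [← mul_assoc x x, hx.eq]
  obtain ⟨i, hi⟩ := exists_one_le_card_mul_norm_equivFun b hE fun h0 => hjk (by
    rw [← LinearMap.mulLeftRight_apply (R := ℂ), h0, LinearMap.zero_apply])
  exact ⟨i, by rwa [LinearMap.mulLeftRight_apply] at hi⟩

attribute [local instance] Matrix.linftyOpNormedRing Matrix.linftyOpNormedAlgebra

lemma exists_isTransverse_of_norm_le [DecidableEq n] [DecidableEq κ]
    {b : Module.Basis κ ℂ (Matrix n n ℂ)} {h : Matrix n n ℂ} (D : Diagonalization h)
    {I : Finset n} (hne : I.Nonempty) (huniv : I ≠ Finset.univ) (hminor : ∀ i, D.minor (b i) I ≠ 0)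
    {c : ℝ} (hone : 1 ≤ c) (hp : ‖Algebra.leftMulMatrix b (D.proj I)‖ ≤ c)
    (hq : ‖Algebra.leftMulMatrix b (1 - D.proj I)‖ ≤ c)
    (hb : ∀ i, ‖Algebra.leftMulMatrix b (b i)‖ ≤ c)
    (hv : ∀ i, ‖(Algebra.leftMulMatrix b (D.proj I * b i * D.proj I + (1 - D.proj I)))⁻¹‖ ≤ c)
    (hcoord : Fintype.card κ * ‖b.equivFun 1‖ ≤ c) :
    ∃ i, IsTransverse (Algebra.leftMulMatrix b (D.proj I)) (Algebra.leftMulMatrix b (b i)) c := by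
  set p := D.proj I
  set L := Algebra.leftMulMatrix b
  have hidem : IsIdempotentElem p := D.isIdempotentElem_proj I
  obtain ⟨i, hi⟩ := exists_one_le_card_mul_norm_equivFun_mul_mul b hidem.one_sub hidem
    (sub_ne_zero.mpr (D.proj_ne_one huniv).symm) (D.proj_ne_zero hne)
  have hmover : 1 ≤ c * ‖L ((1 - p) * b i * p)‖ := by
    calc 1 ≤ Fintype.card κ * ‖b.equivFun ((1 - p) * b i * p)‖ := hi
      _ ≤ Fintype.card κ * (‖L ((1 - p) * b i * p)‖ * ‖b.equivFun 1‖) := by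
        gcongr
        exact norm_equivFun_le b _
      _ = Fintype.card κ * ‖b.equivFun 1‖ * ‖L ((1 - p) * b i * p)‖ := by ring
      _ ≤ c * ‖L ((1 - p) * b i * p)‖ := by gcongr
  have hunit : IsUnit (L (p * b i * p + (1 - p))).det := by
    rw [det_leftMulMatrix]
    exact (hminor i).isUnit.pow _
  refine ⟨i, hone, hidem.map L, hp, ?_, hb i, ⟨nonsingInvUnit _ hunit, ?_, ?_⟩, ?_⟩
  · rwa [← map_one L, ← map_sub]
  · simp [nonsingInvUnit, L, p]
  · simpa [nonsingInvUnit] using hv i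
  · rwa [← map_one L, ← map_sub, ← map_mul, ← map_mul]

end Coordinates

namespace Diagonalization

variable {n : Type*} [Fintype n] [DecidableEq n] {h : Matrix n n ℂ} (D : Diagonalization h)

lemma exists_eigenvalue_gap [Nonempty n] (hdet : ‖h.det‖ = 1) {T : ℝ} (hT : 1 < T)
    (htrace : Fintype.card n * T ≤ ‖h.trace‖) :
    ∃ I : Finset n, I.Nonempty ∧ I ≠ Finset.univ ∧ ∀ a ∈ I, ∀ b ∉ I,
      ‖D.eigenvalue b‖ ^ Fintype.card n * T ≤ ‖D.eigenvalue a‖ ^ Fintype.card n := by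
  have hprod : ∏ a, ‖D.eigenvalue a‖ = 1 := by
    rw [← norm_prod, ← D.det_calculus, D.calculus_eigenvalue, hdet]
  have hpos (a : n) : 0 < ‖D.eigenvalue a‖ :=
    (norm_nonneg _).lt_of_ne' (Finset.prod_ne_zero_iff.mp (hprod ▸ one_ne_zero) a (by simp))
  obtain ⟨ν, hν, htrace_le⟩ := exists_mem_spectrum_norm_trace_le h
  rw [D.spectrum_eq_range] at hν
  obtain ⟨a, rfl⟩ := hν
  exact exists_finset_gap hT hpos hprod
    (le_of_mul_le_mul_left (htrace.trans htrace_le) (Nat.cast_pos.mpr Fintype.card_pos))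

lemma norm_mul_norm_le_of_gap {B : Type*} [NormedRing B] [NormedAlgebra ℂ B]
    (F : Matrix n n ℂ →ₐ[ℂ] B) {T : ℝ} (hT : 0 < T) {I : Finset n}
    (hgap : ∀ a ∈ I, ∀ b ∉ I,
      ‖D.eigenvalue b‖ ^ Fintype.card n * T ≤ ‖D.eigenvalue a‖ ^ Fintype.card n)
    {k : ℕ} {y : Matrix n n ℂ} (hy : h ^ (Fintype.card n * k) * y = 1) :
    ‖F (h ^ (Fintype.card n * k) * (1 - D.proj I))‖ * ‖F (D.proj I * y)‖ ≤
      (T ^ k)⁻¹ * (∑ a, ‖F (D.proj {a})‖) ^ 2 := by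
  set m := Fintype.card n * k
  have hpow : h ^ m = D.calculus (D.eigenvalue ^ m) := by rw [map_pow, D.calculus_eigenvalue]
  have hne (a : n) : D.eigenvalue a ^ m ≠ 0 := by
    have hdet := left_ne_zero_of_mul_eq_one ((det_mul _ _).symm.trans ((congrArg det hy).trans
      det_one))
    rw [hpow, det_calculus] at hdet
    exact Finset.prod_ne_zero_iff.mp hdet a (Finset.mem_univ a)
  have hsmall : h ^ m * (1 - D.proj I) =
      D.calculus fun b => if b ∈ I then 0 else D.eigenvalue b ^ m := by
    rw [one_sub_proj, hpow, ← map_mul]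
    congr 1
    ext b
    by_cases hb : b ∈ I <;> simp [hb]
  have hlarge : D.proj I * y =
      D.calculus fun a => if a ∈ I then (D.eigenvalue a ^ m)⁻¹ else 0 := by
    rw [← mul_one (D.calculus _), ← hy, ← mul_assoc, hpow, ← map_mul, proj]
    congr 2
    ext a
    by_cases ha : a ∈ I <;> simp [ha, hne]
  rw [hsmall, hlarge]
  refine D.norm_calculus_mul_norm_calculus_le F fun b a => ?_
  by_cases hb : b ∈ I
  · simp [hb, hT.le]
  by_cases ha : a ∈ I
  · rw [if_neg hb, if_pos ha, norm_inv, norm_pow, norm_pow, ← div_eq_mul_inv,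
      div_le_iff₀ (norm_pow (D.eigenvalue a) m ▸ norm_pos_iff.mpr (hne a)), inv_mul_eq_div,
      le_div_iff₀ (pow_pos hT k)]
    simpa only [m, mul_pow, pow_mul] using
      pow_le_pow_left₀ (by positivity) (hgap a ha b hb) k
  · simp [ha, hT.le]

end Diagonalization

namespace TransverseFamily

attribute [local instance] Matrix.linftyOpNormedRing Matrix.linftyOpNormedAlgebra

variable {σ n κ : Type*} [Fintype n] [DecidableEq n] [Fintype κ] [DecidableEq κ]
  {T : σ → ℝ} {t : ℕ} {b : σ → Module.Basis κ ℂ (Matrix n n ℂ)} {h : σ → Matrix n n ℂ}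

lemma exists_isTransverse (hF : TransverseFamily T t b h) (D : ∀ s, Diagonalization (h s))
    {I : σ → Finset n} (hne : ∀ s, (I s).Nonempty) (huniv : ∀ s, I s ≠ Finset.univ) :
    ∃ c : σ → ℝ, Tempered T c ∧ ∀ s, ∃ i,
      IsTransverse (Algebra.leftMulMatrix (b s) ((D s).proj (I s)))
        (Algebra.leftMulMatrix (b s) (b s i)) (c s) := by
  have hp := Tempered.comp_finite (fun J => hF.leftMulMatrix_proj D J) I
  have hq := Tempered.comp_finite (fun J => hF.leftMulMatrix_one_sub_proj D J) I
  have hv (i : κ) := Tempered.comp_finite (fun J => hF.inv_leftMulMatrix_compression D i J) I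
  have htempered := ((((((Tempered.const (1 : ℝ)).add hp.norm).add hq.norm).add
    (Tempered.sum Finset.univ fun i _ => (hF.leftMulMatrix_basis i).norm)).add
    (Tempered.sum Finset.univ fun i _ => (hv i).norm)).add
    ((Tempered.const (Fintype.card κ : ℝ)).mul hF.equivFun_one.norm))
  refine ⟨_, htempered, fun s => ?_⟩
  have hp0 := norm_nonneg (Algebra.leftMulMatrix (b s) ((D s).proj (I s)))
  have hq0 := norm_nonneg (Algebra.leftMulMatrix (b s) (1 - (D s).proj (I s)))
  have hcoord0 : 0 ≤ Fintype.card κ * ‖(b s).equivFun 1‖ := by positivity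
  have hb_le (i : κ) := Finset.single_le_sum
    (fun j _ => norm_nonneg (Algebra.leftMulMatrix (b s) (b s j))) (Finset.mem_univ i)
  have hv_le (i : κ) := Finset.single_le_sum (fun j _ => norm_nonneg (Algebra.leftMulMatrix (b s)
    ((D s).proj (I s) * b s j * (D s).proj (I s) + (1 - (D s).proj (I s))))⁻¹) (Finset.mem_univ i)
  have hb0 := Finset.sum_nonneg fun j (_ : j ∈ Finset.univ) =>
    norm_nonneg (Algebra.leftMulMatrix (b s) (b s j))
  have hv0 := Finset.sum_nonneg fun j (_ : j ∈ Finset.univ) =>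
    norm_nonneg (Algebra.leftMulMatrix (b s)
      ((D s).proj (I s) * b s j * (D s).proj (I s) + (1 - (D s).proj (I s))))⁻¹
  exact exists_isTransverse_of_norm_le (D s) (hne s) (huniv s)
    (fun i => hF.minor_ne_zero D i (I s) s) (by linarith) (by linarith) (by linarith)
    (fun i => by linarith [hb_le i]) (fun i => by linarith [hv_le i]) (by linarith)

lemma sum_norm_leftMulMatrix_proj (hF : TransverseFamily T t b h)
    (D : ∀ s, Diagonalization (h s)) :
    Tempered T fun s => ∑ a, ‖Algebra.leftMulMatrix (b s) ((D s).proj {a})‖ :=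
  Tempered.sum _ fun a _ => (hF.leftMulMatrix_proj D {a}).norm

theorem exists_pow_freePair [Nonempty n] {φ : G →* Matrix n n ℂ} {g : σ → κ → G} {h : σ → G}
    (hF : TransverseFamily T t b fun s => φ (h s)) (hg : ∀ s i, φ (g s i) = b s i)
    (D : ∀ s, Diagonalization (φ (h s))) (hdet : ∀ s, ‖(φ (h s)).det‖ = 1) (hT : ∀ s, 2 ≤ T s)
    (htrace : ∀ s, Fintype.card n * T s ≤ ‖(φ (h s)).trace‖) :
    ∃ m, ∀ s, ∃ i, FreePair (h s ^ m) (g s i * h s ^ m) := by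
  choose I hne huniv hgap using fun s =>
    (D s).exists_eigenvalue_gap (hdet s) (one_lt_two.trans_le (hT s)) (htrace s)
  obtain ⟨c, hc, htrans⟩ := hF.exists_isTransverse D hne huniv
  obtain ⟨k, hk⟩ := ((hF.sum_norm_leftMulMatrix_proj D).pow 2).mul
    ((Tempered.const (40 : ℝ)).mul (hc.pow 6))
  refine ⟨Fintype.card n * k, fun s => ?_⟩
  obtain ⟨i, hi⟩ := htrans s
  have : Nonempty κ := ⟨i⟩
  set L := Algebra.leftMulMatrix (b s)
  set m := Fintype.card n * k
  have hT0 : 0 < T s := two_pos.trans_le (hT s)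
  have hinv : φ (h s) ^ m * φ (h s ^ m)⁻¹ = 1 := by
    rw [← map_pow, ← map_mul, mul_inv_cancel, map_one]
  have hcomm : Commute (φ (h s) ^ m) ((D s).proj (I s)) := by
    conv => enter [1]; rw [← (D s).calculus_eigenvalue, ← map_pow]
    exact (Commute.all _ _).map (D s).calculus
  have hsmall := (D s).norm_mul_norm_le_of_gap L hT0 (hgap s) hinv
  refine ⟨i, IsTransverse.freePair (φ := (L : _ →* Matrix κ κ ℂ).comp φ)
    (p := L ((D s).proj (I s))) (c := c s) ?_ ?_ ?_⟩
  · simpa [hg] using hi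
  · simpa using hcomm.map L
  · have hle := (le_abs_self _).trans (hk s)
    rw [max_eq_right (hT s)] at hle
    simp only [MonoidHom.comp_apply, MonoidHom.coe_coe]
    rw [← map_one L, ← map_sub, ← map_mul, ← map_mul, map_pow]
    calc _ ≤ (T s ^ k)⁻¹ * (∑ a, ‖L ((D s).proj {a})‖) ^ 2 * (40 * c s ^ 6) := by
          gcongr
      _ ≤ (T s ^ k)⁻¹ * T s ^ k := by rw [mul_assoc]; gcongr
      _ = 1 := inv_mul_cancel₀ (by positivity)

end TransverseFamily

/-! ### Integral representations -/

section TraceGram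

variable {n κ : Type*} [Fintype n] [Fintype κ]

/-- The Gram matrix of a family of matrices for the trace form `(x, y) ↦ tr (x * y)`. -/
def traceGram {R : Type*} [Semiring R] (b : κ → Matrix n n R) : Matrix κ κ R :=
  of fun i j => trace (b i * b j)

lemma traceGram_mulVec {R : Type*} [CommRing R] (b : κ → Matrix n n R) (v : κ → R) :
    traceGram b *ᵥ v = fun k => trace (b k * ∑ i, v i • b i) := by
  ext k
  simp only [mulVec, dotProduct, traceGram, of_apply, Finset.mul_sum, trace_sum, mul_smul_comm,
    trace_smul, smul_eq_mul, mul_comm]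

variable [DecidableEq κ]

lemma map_det_traceGram [DecidableEq n] {R R' : Type*} [CommRing R] [CommRing R'] (f : R →+* R')
    (b : κ → Matrix n n R) :
    f (traceGram b).det = (traceGram fun i => f.mapMatrix (b i)).det := by
  rw [RingHom.map_det]
  congr 1
  ext i j
  simp only [traceGram, RingHom.mapMatrix_apply, map_apply, of_apply, ← Matrix.map_mul,
    AddMonoidHom.map_trace]

variable {K : Type*} [Field K]

lemma det_traceGram_ne_zero (b : Module.Basis κ K (Matrix n n K)) : (traceGram b).det ≠ 0 := by
  classical
  intro hdet
  obtain ⟨v, hv, hker⟩ := exists_mulVec_eq_zero_iff.mpr hdet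
  rw [traceGram_mulVec] at hker
  have hzero : ∑ i, v i • b i = 0 := by
    refine ext_iff_trace_mul_left.mpr fun y => ?_
    rw [mul_zero, trace_zero, ← b.sum_repr y, Finset.sum_mul, trace_sum]
    exact Finset.sum_eq_zero fun k _ => by
      rw [smul_mul_assoc, trace_smul, congrFun hker k, Pi.zero_apply, smul_zero]
  exact hv (funext (Fintype.linearIndependent_iff.mp b.linearIndependent v hzero))

lemma exists_basis_of_det_traceGram_ne_zero [DecidableEq n] {b : n × n → Matrix n n K}
    (hb : (traceGram b).det ≠ 0) : ∃ B : Module.Basis (n × n) K (Matrix n n K), ⇑B = b := by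
  have hlin : LinearIndependent K b := by
    refine Fintype.linearIndependent_iff.mpr fun v hv => ?_
    refine congrFun (eq_zero_of_mulVec_eq_zero hb ?_)
    rw [traceGram_mulVec, hv]
    simp only [mul_zero, trace_zero]
    rfl
  have hspan : Submodule.span K (Set.range b) = ⊤ := by
    refine hlin.span_eq_top_of_card_eq_finrank' ?_
    rw [Module.finrank_matrix, Module.finrank_self, mul_one, Fintype.card_prod]
  exact ⟨Module.Basis.mk hlin hspan.ge, Module.Basis.coe_mk hlin hspan.ge⟩

lemma equivFun_eq_inv_traceGram_mulVec (b : Module.Basis κ K (Matrix n n K)) (x : Matrix n n K) :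
    b.equivFun x = (traceGram b)⁻¹ *ᵥ fun k => trace (b k * x) := by
  have hx : traceGram b *ᵥ b.equivFun x = fun k => trace (b k * x) := by
    rw [traceGram_mulVec, b.sum_equivFun]
  rw [← hx, mulVec_mulVec, nonsing_inv_mul _ (isUnit_iff_ne_zero.mpr (det_traceGram_ne_zero b)),
    one_mulVec]

end TraceGram

section BaseChange

variable {n : Type*} [Fintype n] [DecidableEq n]

/-- The representation over `R` obtained from the integral representation `ρ`; over `ZMod q` it is
reduction modulo `q`. -/
def baseChange (R : Type*) [CommRing R] (ρ : G →* Matrix n n ℤ) : G →* Matrix n n R :=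
  (Int.castRingHom R).mapMatrix.toMonoidHom.comp ρ

variable (ρ : G →* Matrix n n ℤ)

lemma baseChange_apply (R : Type*) [CommRing R] (x : G) :
    baseChange R ρ x = (Int.castRingHom R).mapMatrix (ρ x) := rfl

lemma trace_baseChange (R : Type*) [CommRing R] (x : G) :
    (baseChange R ρ x).trace = ((ρ x).trace : R) :=
  (AddMonoidHom.map_trace (Int.castRingHom R).toAddMonoidHom (ρ x)).symm

lemma norm_trace_baseChange (x : G) : ‖(baseChange ℂ ρ x).trace‖ = |((ρ x).trace : ℝ)| := by
  rw [trace_baseChange, Complex.norm_intCast]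

lemma norm_det_baseChange (x : G) : ‖(baseChange ℂ ρ x).det‖ = 1 := by
  have hunit : IsUnit (ρ x).det := (isUnit_iff_isUnit_det _).mp ((Group.isUnit x).map ρ)
  rw [baseChange_apply, ← RingHom.map_det, eq_intCast, Complex.norm_intCast]
  exact_mod_cast Int.isUnit_iff_abs_eq.mp hunit

lemma one_le_norm_intCast {x : ℤ} (hx : x ≠ 0) : 1 ≤ ‖(x : ℂ)‖ := by
  rw [Complex.norm_intCast]
  exact_mod_cast Int.one_le_abs hx

lemma ne_zero_of_cast_eq {q : ℕ} {x y : ℤ} (hxy : (x : ZMod q) = y) (hy : y ≠ 0)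
    (hq : y.natAbs < q) : x ≠ 0 := by
  rintro rfl
  rw [ZMod.intCast_eq_intCast_iff_dvd_sub, sub_zero] at hxy
  exact hy (Int.eq_zero_of_abs_lt_dvd hxy (by rw [Int.abs_eq_natAbs]; lia))

lemma le_abs_of_cast_eq {q : ℕ} {x y : ℤ} (hxy : (x : ZMod q) = y) (hq : 2 * y.natAbs ≤ q) :
    |y| ≤ |x| := by
  rw [ZMod.intCast_eq_intCast_iff_dvd_sub] at hxy
  by_contra! hlt
  simp only [Int.abs_eq_natAbs] at hlt
  have hzero := Int.eq_zero_of_abs_lt_dvd hxy (by rw [Int.abs_eq_natAbs]; lia)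
  lia

lemma baseChange_zmod_mono {q q' : ℕ} (hq : q ∣ q') {x y : G}
    (hxy : baseChange (ZMod q') ρ x = baseChange (ZMod q') ρ y) :
    baseChange (ZMod q) ρ x = baseChange (ZMod q) ρ y := by
  have hcast (z : G) : baseChange (ZMod q) ρ z =
      (ZMod.castHom hq (ZMod q)).mapMatrix (baseChange (ZMod q') ρ z) := by
    rw [baseChange_apply, baseChange_apply, ← RingHom.comp_apply, RingHom.mapMatrix_comp,
      RingHom.eq_intCast' (RingHom.comp _ _)]
  rw [hcast, hcast, hxy]

lemma exists_pow_baseChange_zmod_eq_one {q : ℕ} (hq : q ≠ 0) :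
    ∃ e ≠ 0, ∀ x : G, baseChange (ZMod q) ρ (x ^ e) = 1 := by
  have : NeZero q := ⟨hq⟩
  refine ⟨Nat.card (Matrix n n (ZMod q))ˣ, Nat.card_pos.ne', fun x => ?_⟩
  rw [← MonoidHom.coe_toHomUnits (baseChange (ZMod q) ρ), map_pow, pow_card_eq_one', Units.val_one]

variable {ρ}

lemma exists_modulus {y : G} (hsep : (baseChange ℂ ρ y).charpoly.Separable) :
    ∃ t, ∃ q ≠ 0, ∀ x u, baseChange (ZMod q) ρ x = baseChange (ZMod q) ρ y →
      baseChange (ZMod q) ρ u = baseChange (ZMod q) ρ y →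
        charpolyResultant (ρ x) ≠ 0 ∧ transversality t (ρ x) 1 ≠ 0 ∧
          transversality t (ρ x) (ρ u) ≠ 0 ∧ |(ρ y).trace| ≤ |(ρ x).trace| := by
  obtain ⟨D, hD⟩ := exists_diagonalization_of_separable hsep
  obtain ⟨t, ht⟩ := D.exists_injective_shiftedProd hD
  have hres : charpolyResultant (ρ y) ≠ 0 := ne_zero_of_map (f := Int.castRingHom ℂ) <| by
    rw [map_charpolyResultant]
    exact charpolyResultant_ne_zero_iff.mpr hsep
  have hone : transversality t (ρ y) 1 ≠ 0 := ne_zero_of_map (f := Int.castRingHom ℂ) <| by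
    rw [map_transversality, map_one]
    exact D.transversality_one_ne_zero_iff.mpr ht
  have hself : transversality t (ρ y) (ρ y) ≠ 0 := ne_zero_of_map (f := Int.castRingHom ℂ) <| by
    rw [map_transversality]
    exact D.transversality_self_ne_zero ht
      (norm_ne_zero_iff.mp ((norm_det_baseChange ρ y).trans_ne one_ne_zero))
  obtain ⟨q, hqres, hqone, hqself, hqtrace⟩ : ∃ q : ℕ, (charpolyResultant (ρ y)).natAbs < q ∧
      (transversality t (ρ y) 1).natAbs < q ∧ (transversality t (ρ y) (ρ y)).natAbs < q ∧
        2 * (ρ y).trace.natAbs ≤ q :=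
    ⟨(charpolyResultant (ρ y)).natAbs + (transversality t (ρ y) 1).natAbs +
      (transversality t (ρ y) (ρ y)).natAbs + 2 * (ρ y).trace.natAbs + 1, by lia⟩
  refine ⟨t, q, by lia, fun x u hx hu => ⟨ne_zero_of_cast_eq ?_ hres hqres,
    ne_zero_of_cast_eq ?_ hone hqone, ne_zero_of_cast_eq ?_ hself hqself,
      le_abs_of_cast_eq ?_ hqtrace⟩⟩ <;>
    rw [baseChange_apply, baseChange_apply] at hx hu
  · simp only [← eq_intCast (Int.castRingHom _), map_charpolyResultant, hx]
  · simp only [← eq_intCast (Int.castRingHom _), map_transversality, map_one, hx]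
  · simp only [← eq_intCast (Int.castRingHom _), map_transversality, hx, hu]
  · rw [← trace_baseChange, ← trace_baseChange, baseChange_apply, baseChange_apply, hx]

lemma exists_det_traceGram_ne_zero {q : ℕ} (y : G)
    (hspan : Submodule.span ℂ (baseChange ℂ ρ '' {x | baseChange (ZMod q) ρ x = 1}) = ⊤) :
    ∃ g : n × n → G, (∀ i, baseChange (ZMod q) ρ (g i) = baseChange (ZMod q) ρ y) ∧
      (traceGram fun i => ρ (g i)).det ≠ 0 := by
  let b₀ := Module.Basis.ofSpan hspan.ge
  let b := b₀.reindex (b₀.indexEquiv (stdBasis ℂ n n))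
  have hb (i : n × n) : ∃ x, baseChange (ZMod q) ρ x = 1 ∧ baseChange ℂ ρ x = b i :=
    Module.Basis.ofSpan_subset hspan.ge (by rw [Module.Basis.reindex_apply]; exact ⟨_, rfl⟩)
  choose g hg hgb using hb
  let b' := (baseChange ℂ ρ).toHomUnits y • b
  refine ⟨fun i => y * g i, fun i => by rw [map_mul, hg, mul_one],
    ne_zero_of_map (f := Int.castRingHom ℂ) ?_⟩
  have hb' : (fun i => (Int.castRingHom ℂ).mapMatrix (ρ (y * g i))) = b' := by
    ext1 i
    rw [← baseChange_apply, map_mul, hgb]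
    rfl
  rw [map_det_traceGram, hb']
  exact det_traceGram_ne_zero b'

lemma exists_wordBall_det_traceGram_ne_zero {q : ℕ} (hq : q ≠ 0) (y : G)
    (hspan : Submodule.span ℂ (baseChange ℂ ρ '' {x | baseChange (ZMod q) ρ x = 1}) = ⊤) :
    ∃ L, ∀ S : Set G, Subgroup.closure S = ⊤ → ∃ g : n × n → G, (∀ i, g i ∈ wordBall S L) ∧
      (∀ i, baseChange (ZMod q) ρ (g i) = baseChange (ZMod q) ρ y) ∧
        (traceGram fun i => ρ (g i)).det ≠ 0 := by
  obtain ⟨g₀, hg₀, hdet⟩ := exists_det_traceGram_ne_zero y hspan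
  set d := (traceGram fun i => ρ (g₀ i)).det
  let q' := q * (d.natAbs + 1)
  have : NeZero q' := ⟨Nat.mul_ne_zero hq (Nat.succ_ne_zero _)⟩
  obtain ⟨L, hL⟩ := exists_wordBall_surjOn_range (baseChange (ZMod q') ρ).toHomUnits
  refine ⟨L, fun S hS => ?_⟩
  choose g hg hgg₀ using fun i => hL S hS (g₀ i)
  have hred (i : n × n) : baseChange (ZMod q') ρ (g i) = baseChange (ZMod q') ρ (g₀ i) :=
    congrArg Units.val (hgg₀ i)
  refine ⟨g, hg, fun i => (baseChange_zmod_mono ρ (Dvd.intro _ rfl) (hred i)).trans (hg₀ i),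
    ne_zero_of_cast_eq (q := q') (y := d) ?_ hdet
      (Nat.le_mul_of_pos_left _ (Nat.pos_of_ne_zero hq))⟩
  simp only [d, ← eq_intCast (Int.castRingHom _), map_det_traceGram, ← baseChange_apply, hred]

end BaseChange

section TraceFrame

attribute [local instance] Matrix.linftyOpNormedRing Matrix.linftyOpNormedAlgebra

variable {σ n κ : Type*} [Fintype n] [DecidableEq n] [Fintype κ] [DecidableEq κ]
  {φ : G →* Matrix n n ℂ} {S : σ → Set G} {L : ℕ} {T : σ → ℝ} {g : σ → κ → G}
  {b : σ → Module.Basis κ ℂ (Matrix n n ℂ)}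

/-- Bases `b s` of the matrix algebra made of images of words `g s i` of length at most `L` in
`S s`, with Gram determinant bounded below, and a bound `T s` for the traces of the words of length
at most `3 * L`. -/
structure TraceFrame (φ : G →* Matrix n n ℂ) (S : σ → Set G) (L : ℕ) (T : σ → ℝ) (g : σ → κ → G)
    (b : σ → Module.Basis κ ℂ (Matrix n n ℂ)) : Prop where
  mem_wordBall (s : σ) (i : κ) : g s i ∈ wordBall (S s) L
  map_eq (s : σ) (i : κ) : φ (g s i) = b s i
  norm_trace_le (s : σ) {x : G} (hx : x ∈ wordBall (S s) (3 * L)) : ‖(φ x).trace‖ ≤ T s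
  one_le_norm_det (s : σ) : 1 ≤ ‖(traceGram (b s)).det‖

namespace TraceFrame

lemma trace (hF : TraceFrame φ S L T g b) {x : σ → G} (hx : ∀ s, x s ∈ wordBall (S s) (3 * L)) :
    Tempered T fun s => (φ (x s)).trace :=
  Tempered.scale.mono fun s => (hF.norm_trace_le s (hx s)).trans
    ((le_max_right _ _).trans (Real.le_norm_self _))

lemma inv_traceGram (hF : TraceFrame φ S L T g b) : Tempered T fun s => (traceGram (b s))⁻¹ := by
  refine Tempered.matrix_inv (Tempered.of_entries fun i j => ?_)
    (Tempered.inv_of_one_le hF.one_le_norm_det)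
  simp only [traceGram, of_apply, ← hF.map_eq, ← map_mul]
  exact hF.trace fun s => wordBall_mono _ (by lia)
    (mul_mem_wordBall (hF.mem_wordBall s i) (hF.mem_wordBall s j))

lemma equivFun (hF : TraceFrame φ S L T g b) {x : σ → G}
    (hx : ∀ s, x s ∈ wordBall (S s) (2 * L)) : Tempered T fun s => (b s).equivFun (φ (x s)) := by
  simp only [equivFun_eq_inv_traceGram_mulVec]
  refine hF.inv_traceGram.mulVec (Tempered.pi fun i => ?_)
  simp only [← hF.map_eq, ← map_mul]
  exact hF.trace fun s => wordBall_mono _ (by lia) (mul_mem_wordBall (hF.mem_wordBall s i) (hx s))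

lemma leftMulMatrix (hF : TraceFrame φ S L T g b) (k : ℕ) {x : σ → G}
    (hx : ∀ s, x s ∈ wordBall (S s) (L * k)) :
    Tempered T fun s => Algebra.leftMulMatrix (b s) (φ (x s)) := by
  induction k generalizing x with
  | zero =>
    have hone (s : σ) : x s = 1 := by simpa [wordBall] using hx s
    simpa only [hone, map_one] using Tempered.const 1
  | succ k ih =>
    simp only [mul_add_one, wordBall_add] at hx
    choose y hy z hz hyz using hx
    simp only [← hyz, map_mul]
    refine (ih hy).mul (Tempered.of_entries fun i j => ?_)
    simp only [Algebra.leftMulMatrix_eq_repr_mul, ← Module.Basis.equivFun_apply, ← hF.map_eq,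
      ← map_mul]
    refine (hF.equivFun fun s => ?_).apply i
    rw [two_mul]
    exact mul_mem_wordBall (hz s) (hF.mem_wordBall s j)

lemma leftMulMatrix_basis (hF : TraceFrame φ S L T g b) (i : κ) :
    Tempered T fun s => Algebra.leftMulMatrix (b s) (b s i) := by
  simp only [← hF.map_eq]
  exact hF.leftMulMatrix 1 fun s => by simpa only [mul_one] using hF.mem_wordBall s i

lemma transverseFamily (hF : TraceFrame φ S L T g b) {t k : ℕ} {h : σ → G}
    (hh : ∀ s, h s ∈ wordBall (S s) (L * k)) (hone : ∀ s, 1 ≤ ‖transversality t (φ (h s)) 1‖)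
    (hbasis : ∀ s i, 1 ≤ ‖transversality t (φ (h s)) (φ (g s i))‖) :
    TransverseFamily T t b fun s => φ (h s) where
  leftMulMatrix := hF.leftMulMatrix k hh
  leftMulMatrix_basis := hF.leftMulMatrix_basis
  equivFun_one := by
    simpa only [map_one] using hF.equivFun fun s => one_mem_wordBall (S s) (2 * L)
  one_le_norm_transversality_one := hone
  one_le_norm_transversality s i := hF.map_eq s i ▸ hbasis s i

lemma exists_norm_leftMulMatrix_le [Nonempty κ] (hF : TraceFrame φ S L T g b) :
    ∃ c : ℕ, ∀ s x, ∃ i, ‖Algebra.leftMulMatrix (b s) x‖ ≤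
      max 2 (T s) ^ c * ‖(b s i * x).trace‖ := by
  obtain ⟨c, hc⟩ : Tempered T fun s => ‖(traceGram (b s))⁻¹‖ *
      ∑ i, ‖Algebra.leftMulMatrix (b s) (b s i)‖ :=
    hF.inv_traceGram.norm.mul
      (Tempered.sum Finset.univ fun i _ => (hF.leftMulMatrix_basis i).norm)
  refine ⟨c, fun s x => ?_⟩
  obtain ⟨i, hi⟩ := Finite.exists_max fun i => ‖(b s i * x).trace‖
  refine ⟨i, ?_⟩
  have hcoord : ‖(b s).equivFun x‖ ≤ ‖(traceGram (b s))⁻¹‖ * ‖(b s i * x).trace‖ := by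
    rw [equivFun_eq_inv_traceGram_mulVec]
    exact (linfty_opNorm_mulVec _ _).trans (mul_le_mul_of_nonneg_left
      ((pi_norm_le_iff_of_nonneg (norm_nonneg _)).mpr hi) (norm_nonneg _))
  calc ‖Algebra.leftMulMatrix (b s) x‖
      = ‖∑ j, (b s).equivFun x j • Algebra.leftMulMatrix (b s) (b s j)‖ := by
        simp only [← map_smul, ← map_sum, (b s).sum_equivFun]
    _ ≤ ∑ j, ‖(b s).equivFun x‖ * ‖Algebra.leftMulMatrix (b s) (b s j)‖ :=
        norm_sum_le_of_le _ fun j _ => (norm_smul_le _ _).trans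
          (mul_le_mul_of_nonneg_right (norm_le_pi_norm _ j) (norm_nonneg _))
    _ ≤ ‖(traceGram (b s))⁻¹‖ * ‖(b s i * x).trace‖ *
          ∑ j, ‖Algebra.leftMulMatrix (b s) (b s j)‖ := by
        rw [← Finset.mul_sum]
        gcongr
    _ = ‖(traceGram (b s))⁻¹‖ * (∑ j, ‖Algebra.leftMulMatrix (b s) (b s j)‖) *
          ‖(b s i * x).trace‖ := by ring
    _ ≤ _ := mul_le_mul_of_nonneg_right ((Real.le_norm_self _).trans (hc s)) (norm_nonneg _)

-- A word whose trace is at least the square of the dimension has an eigenvalue of size at least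
-- `√(T s)`, so a large power of it is large in the frame, hence is seen by some trace.
lemma exists_card_mul_le_norm_trace [Nonempty κ] [Nontrivial n] (hF : TraceFrame φ S L T g b)
    (hT : ∀ s, Fintype.card n ^ 2 ≤ T s) {w : σ → G} (hw : ∀ s, T s ≤ ‖(φ (w s)).trace‖)
    {e : ℕ} (he : e ≠ 0) : ∃ k, ∀ s, ∃ i,
      Fintype.card n * T s ≤ ‖(φ (g s i * w s ^ (e * k))).trace‖ := by
  obtain ⟨c, hc⟩ := hF.exists_norm_leftMulMatrix_le
  refine ⟨2 * (c + 2), fun s => ?_⟩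
  have hcard : (2 : ℝ) ≤ Fintype.card n := by exact_mod_cast Fintype.one_lt_card (α := n)
  have hT2 : 2 ≤ T s := by nlinarith [hT s]
  have hTpos : 0 < T s := zero_lt_two.trans_le hT2
  obtain ⟨ν, hν, htrace⟩ := exists_mem_spectrum_norm_trace_le (φ (w s))
  have hνT : T s ≤ ‖ν‖ ^ 2 := by
    refine le_of_mul_le_mul_left ?_ hTpos
    calc T s * T s ≤ (Fintype.card n * ‖ν‖) ^ 2 := by
          rw [← sq]
          exact pow_le_pow_left₀ hTpos.le ((hw s).trans htrace) 2
      _ ≤ T s * ‖ν‖ ^ 2 := by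
          rw [mul_pow]
          exact mul_le_mul_of_nonneg_right (hT s) (sq_nonneg _)
  obtain ⟨i, hi⟩ := hc s (φ (w s ^ (e * (2 * (c + 2)))))
  refine ⟨i, ?_⟩
  rw [max_eq_right hT2] at hi
  have hpow : T s ^ c * T s ^ 2 ≤
      T s ^ c * ‖(b s i * φ (w s ^ (e * (2 * (c + 2))))).trace‖ := by
    calc T s ^ c * T s ^ 2 = T s ^ (c + 2) := (pow_add _ _ _).symm
      _ ≤ (‖ν‖ ^ 2) ^ (e * (c + 2)) := by
          refine (pow_le_pow_left₀ hTpos.le hνT _).trans (pow_le_pow_right₀ (by linarith) ?_)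
          exact Nat.le_mul_of_pos_left _ (Nat.pos_of_ne_zero he)
      _ = ‖ν ^ (e * (2 * (c + 2)))‖ := by rw [norm_pow, ← pow_mul, mul_left_comm]
      _ ≤ _ := (norm_le_norm_leftMulMatrix_of_mem_spectrum (b s)
          (by simpa only [map_pow] using spectrum.pow_mem_pow _ _ hν)).trans hi
  rw [map_mul, hF.map_eq]
  refine le_trans ?_ (le_of_mul_le_mul_left hpow (pow_pos hTpos c))
  nlinarith [hT s]

end TraceFrame

end TraceFrame

section IntegralRepresentation

attribute [local instance] Matrix.linftyOpNormedRing Matrix.linftyOpNormedAlgebra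

variable {σ n : Type*} [Fintype n] [DecidableEq n] {ρ : G →* Matrix n n ℤ}

lemma exists_traceFrame {S : σ → Set G} (hS : ∀ s, (S s).Finite) {L : ℕ} {g : σ → n × n → G}
    (hg : ∀ s i, g s i ∈ wordBall (S s) L) (hdet : ∀ s, (traceGram fun i => ρ (g s i)).det ≠ 0) :
    ∃ T b, ∃ w : σ → G, TraceFrame (baseChange ℂ ρ) S L T g b ∧
      ∀ s, w s ∈ wordBall (S s) (3 * L) ∧ T s = ‖(baseChange ℂ ρ (w s)).trace‖ := by
  have hgram (s : σ) : (((traceGram fun i => ρ (g s i)).det : ℤ) : ℂ) =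
      (traceGram fun i => baseChange ℂ ρ (g s i)).det :=
    map_det_traceGram (Int.castRingHom ℂ) _
  choose b hb using fun s => exists_basis_of_det_traceGram_ne_zero
    ((hgram s).symm.trans_ne (Int.cast_ne_zero.mpr (hdet s)))
  choose w hw hmax using fun s => Set.exists_max_image _ (fun x => ‖(baseChange ℂ ρ x).trace‖)
    (finite_wordBall (hS s) (3 * L)) ⟨1, one_mem_wordBall _ _⟩
  refine ⟨fun s => ‖(baseChange ℂ ρ (w s)).trace‖, b, w, ⟨hg, fun s i => (congrFun (hb s) i).symm,
    fun s x => hmax s x, fun s => ?_⟩, fun s => ⟨hw s, rfl⟩⟩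
  rw [hb, ← hgram]
  exact one_le_norm_intCast (hdet s)

theorem exists_freePair_mem_wordBall [Nontrivial n] {y : G}
    (hsep : (baseChange ℂ ρ y).charpoly.Separable)
    (htrace : (Fintype.card n : ℤ) ^ 2 ≤ (ρ y).trace)
    (hspan : ∀ q ≠ 0,
      Submodule.span ℂ (baseChange ℂ ρ '' {x | baseChange (ZMod q) ρ x = 1}) = ⊤) :
    ∃ l, ∀ S : Finset G, Subgroup.closure (S : Set G) = ⊤ →
      ∃ a ∈ wordBall (S : Set G) l, ∃ c ∈ wordBall (S : Set G) l, FreePair a c := by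
  obtain ⟨t, q, hq, hgeneric⟩ := exists_modulus hsep
  obtain ⟨e, he, hpow⟩ := exists_pow_baseChange_zmod_eq_one ρ hq
  obtain ⟨L, hL⟩ := exists_wordBall_det_traceGram_ne_zero hq y (hspan q hq)
  let σ := {S : Finset G // Subgroup.closure (S : Set G) = ⊤}
  choose g hg hgy hdet using fun S : σ => hL S.1 S.2
  obtain ⟨T, b, w, hF, hw⟩ := exists_traceFrame (fun S : σ => S.1.finite_toSet) hg hdet
  have hT (S : σ) : Fintype.card n ^ 2 ≤ T S := by
    obtain ⟨i⟩ : Nonempty (n × n) := inferInstance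
    refine le_trans ?_ (hF.norm_trace_le S (wordBall_mono _ (by lia) (hg S i)))
    rw [norm_trace_baseChange]
    exact_mod_cast htrace.trans
      ((le_abs_self _).trans (hgeneric _ _ (hgy S i) (hgy S i)).2.2.2)
  have hcard : (2 : ℝ) ≤ Fintype.card n := by exact_mod_cast Fintype.one_lt_card (α := n)
  obtain ⟨k, hk⟩ := hF.exists_card_mul_le_norm_trace hT (fun S => (hw S).2.le) he
  choose i hi using hk
  let h (S : σ) : G := g S (i S) * w S ^ (e * k)
  have hy (S : σ) : baseChange (ZMod q) ρ (h S) = baseChange (ZMod q) ρ y := by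
    rw [map_mul, pow_mul, map_pow _ (w S ^ e), hpow, one_pow, mul_one, hgy]
  have hmem (S : σ) : h S ∈ wordBall (S.1 : Set G) (L * (1 + 3 * (e * k))) :=
    wordBall_mono _ (by lia) (mul_mem_wordBall (hg S (i S)) (pow_mem_wordBall (hw S).1 (e * k)))
  have hTrans : TransverseFamily T t b fun S => baseChange ℂ ρ (h S) := by
    refine hF.transverseFamily hmem (fun S => ?_) fun S j => ?_
    · have := one_le_norm_intCast (hgeneric _ _ (hy S) (hy S)).2.1
      rwa [← eq_intCast (Int.castRingHom ℂ), map_transversality, map_one] at this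
    · have := one_le_norm_intCast (hgeneric _ _ (hy S) (hgy S j)).2.2.1
      rwa [← eq_intCast (Int.castRingHom ℂ), map_transversality] at this
  have hdiag (S : σ) : Nonempty (Diagonalization (baseChange ℂ ρ (h S))) := by
    have hres := Int.cast_ne_zero (α := ℂ).mpr (hgeneric _ _ (hy S) (hy S)).1
    rw [← eq_intCast (Int.castRingHom ℂ), map_charpolyResultant, charpolyResultant_ne_zero_iff]
      at hres
    exact (exists_diagonalization_of_separable hres).nonempty
  obtain ⟨m, hm⟩ := hTrans.exists_pow_freePair hF.map_eq (fun S => (hdiag S).some)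
    (fun S => norm_det_baseChange ρ _) (fun S => by nlinarith [hT S]) hi
  refine ⟨L + L * (1 + 3 * (e * k)) * m, fun S hS => ?_⟩
  obtain ⟨j, hj⟩ := hm ⟨S, hS⟩
  have hpowmem := pow_mem_wordBall (hmem ⟨S, hS⟩) m
  exact ⟨_, wordBall_mono _ (by lia) hpowmem, _, mul_mem_wordBall (hg ⟨S, hS⟩ j) hpowmem, hj⟩

theorem one_lt_minGrowth_of_span_eq_top [Nontrivial n] (hfg : Group.FG G) {y : G}
    (hsep : (baseChange ℂ ρ y).charpoly.Separable)
    (htrace : (Fintype.card n : ℤ) ^ 2 ≤ (ρ y).trace)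
    (hspan : ∀ q ≠ 0,
      Submodule.span ℂ (baseChange ℂ ρ '' {x | baseChange (ZMod q) ρ x = 1}) = ⊤) :
    1 < minGrowth G := by
  obtain ⟨l, hl⟩ := exists_freePair_mem_wordBall hsep htrace hspan
  refine one_lt_minGrowth_of_freePair hfg l.succ_ne_zero fun S hS => ?_
  obtain ⟨a, ha, c, hc, hac⟩ := hl S hS
  exact ⟨a, wordBall_mono _ l.le_succ ha, c, wordBall_mono _ l.le_succ hc, hac⟩

end IntegralRepresentation

/-! ### The integral symplectic group -/

section Shear

variable {g : ℕ} {R : Type*} [CommRing R]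

/-- The involution of the indices exchanging the two members of each hyperbolic pair `{2k, 2k + 1}`
of the standard basis. -/
def partner (i : Fin (2 * g)) : Fin (2 * g) :=
  ⟨if (i : ℕ) % 2 = 0 then i + 1 else i - 1, by split_ifs <;> lia⟩

/-- The value of the standard symplectic form on the basis vectors `i` and `partner i`. -/
def partnerSign (i : Fin (2 * g)) : ℤ := if (i : ℕ) % 2 = 0 then 1 else -1

lemma val_partner (i : Fin (2 * g)) :
    (partner i : ℕ) = if (i : ℕ) % 2 = 0 then (i : ℕ) + 1 else i - 1 := rfl

lemma partner_involutive : Function.Involutive (partner (g := g)) := fun i => by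
  apply Fin.ext
  rw [val_partner, val_partner]
  split_ifs <;> lia

@[simp] lemma partner_partner (i : Fin (2 * g)) : partner (partner i) = i := partner_involutive i

lemma partner_ne (i : Fin (2 * g)) : partner i ≠ i := fun h => by
  have hval := congrArg Fin.val h
  rw [val_partner] at hval
  split_ifs at hval <;> lia

lemma ne_partner (i : Fin (2 * g)) : i ≠ partner i := (partner_ne i).symm

lemma partner_eq_iff {i j : Fin (2 * g)} : partner i = j ↔ i = partner j :=
  partner_involutive.eq_iff

lemma partnerSign_partner (i : Fin (2 * g)) : partnerSign (partner i) = -partnerSign i := by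
  unfold partnerSign
  rw [val_partner]
  split_ifs <;> lia

lemma partnerSign_mul_self (i : Fin (2 * g)) : partnerSign i * partnerSign i = 1 := by
  unfold partnerSign; split_ifs <;> rfl

lemma stdSymplecticJ_apply (i j : Fin (2 * g)) :
    stdSymplecticJ g i j = if partner i = j then partnerSign i else 0 := by
  simp only [stdSymplecticJ, partnerSign, of_apply, Fin.ext_iff, val_partner]
  split_ifs <;> first | rfl | lia

lemma transpose_stdSymplecticJ : (stdSymplecticJ g)ᵀ = -stdSymplecticJ g := by
  ext i j
  rw [transpose_apply, neg_apply, stdSymplecticJ_apply, stdSymplecticJ_apply]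
  rcases eq_or_ne (partner i) j with rfl | hij
  · simp [partnerSign_partner]
  · rw [if_neg hij, if_neg (mt (fun h => partner_eq_iff.2 h.symm) hij), neg_zero]

lemma stdSymplecticJ_mulVec (v : Fin (2 * g) → R) (i : Fin (2 * g)) :
    ((Int.castRingHom R).mapMatrix (stdSymplecticJ g) *ᵥ v) i = partnerSign i * v (partner i) := by
  simp [mulVec, dotProduct, stdSymplecticJ_apply]

lemma vecMul_stdSymplecticJ (x : Fin (2 * g) → ℤ) (i : Fin (2 * g)) :
    (x ᵥ* stdSymplecticJ g) i = -partnerSign i * x (partner i) := by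
  rw [← mulVec_transpose, transpose_stdSymplecticJ, neg_mulVec, Pi.neg_apply, neg_mul]
  exact congrArg Neg.neg (by simpa using stdSymplecticJ_mulVec x i)

variable {B : Matrix (Fin (2 * g)) (Fin (2 * g)) ℤ}

/-- A symmetric matrix with isotropic column space; these are the matrices for which all the
`1 + c • J * B` are symplectic and form a one-parameter group. -/
structure IsotropicSymm (B : Matrix (Fin (2 * g)) (Fin (2 * g)) ℤ) : Prop where
  transpose_eq : Bᵀ = B
  mul_mul_eq_zero : B * stdSymplecticJ g * B = 0

namespace IsotropicSymm

lemma one_add_smul_mul_one_add_smul (hB : IsotropicSymm B) (c d : ℤ) :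
    (1 + c • (stdSymplecticJ g * B)) * (1 + d • (stdSymplecticJ g * B)) =
      1 + (c + d) • (stdSymplecticJ g * B) := by
  have hsq : stdSymplecticJ g * B * (stdSymplecticJ g * B) = 0 := by
    rw [mul_assoc, ← mul_assoc B, hB.mul_mul_eq_zero, mul_zero]
  rw [add_mul, mul_add, mul_add, smul_mul_smul_comm, hsq, smul_zero, add_smul]
  simp only [one_mul, mul_one]
  abel

lemma one_add_smul_preserves (hB : IsotropicSymm B) (c : ℤ) :
    (1 + c • (stdSymplecticJ g * B)) * stdSymplecticJ g * (1 + c • (stdSymplecticJ g * B))ᵀ =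
      stdSymplecticJ g := by
  have hzero : stdSymplecticJ g * B * stdSymplecticJ g * (B * stdSymplecticJ g) = 0 := by
    rw [← mul_assoc, mul_assoc (stdSymplecticJ g), mul_assoc (stdSymplecticJ g),
      hB.mul_mul_eq_zero, mul_zero, zero_mul]
  rw [transpose_add, transpose_one, transpose_smul, transpose_mul, hB.transpose_eq,
    transpose_stdSymplecticJ, mul_neg, smul_neg, add_mul, one_mul, smul_mul_assoc, mul_add, mul_one,
    mul_neg, mul_smul_comm, add_mul, smul_mul_assoc, hzero, mul_assoc]
  simp

/-- The one-parameter group `c ↦ 1 + c • J * B` of symplectic shears. -/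
def shear (hB : IsotropicSymm B) : Multiplicative ℤ →* Sp g where
  toFun c := ⟨⟨1 + c.toAdd • (stdSymplecticJ g * B), 1 + (-c.toAdd) • (stdSymplecticJ g * B),
      by rw [hB.one_add_smul_mul_one_add_smul]; simp,
      by rw [hB.one_add_smul_mul_one_add_smul]; simp⟩,
    hB.one_add_smul_preserves c.toAdd⟩
  map_one' := by ext; simp
  map_mul' c d := Subtype.ext (Units.ext (hB.one_add_smul_mul_one_add_smul c.toAdd d.toAdd).symm)

end IsotropicSymm

/-- The tautological representation of `Sp(2g,ℤ)`. -/
def stdRep : Sp g →* Matrix (Fin (2 * g)) (Fin (2 * g)) ℤ := (Units.coeHom _).comp (Sp g).subtype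

lemma stdRep_injective : Function.Injective (stdRep (g := g)) :=
  fun _ _ h => Subtype.ext (Units.ext h)

lemma stdRep_mul_stdSymplecticJ_mul_transpose (M : Sp g) :
    stdRep M * stdSymplecticJ g * (stdRep M)ᵀ = stdSymplecticJ g := M.2

lemma stdRep_shear (hB : IsotropicSymm B) (c : ℤ) :
    stdRep (hB.shear (.ofAdd c)) = 1 + c • (stdSymplecticJ g * B) := rfl

lemma vecMul_stdRep_shear (hB : IsotropicSymm B) (c : ℤ) (x : Fin (2 * g) → ℤ) :
    x ᵥ* stdRep (hB.shear (.ofAdd c)) = x + c • ((x ᵥ* stdSymplecticJ g) ᵥ* B) := by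
  rw [stdRep_shear, vecMul_add, vecMul_one, vecMul_smul, vecMul_vecMul]

lemma baseChange_stdRep_shear (hB : IsotropicSymm B) (c : ℤ) :
    baseChange R stdRep (hB.shear (.ofAdd c)) =
      1 + (c : R) • (Int.castRingHom R).mapMatrix (stdSymplecticJ g * B) := by
  rw [baseChange_apply, stdRep_shear, map_add, map_one, map_zsmul, Int.cast_smul_eq_zsmul]

lemma single_mul_stdSymplecticJ_mul_single {i j : Fin (2 * g)} (hij : partner i ≠ j)
    (k l : Fin (2 * g)) : single k i (1 : ℤ) * stdSymplecticJ g * single j l 1 = 0 := by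
  rw [single_mul_mul_single, stdSymplecticJ_apply, if_neg hij]
  simp

lemma isotropicSymm_single (i : Fin (2 * g)) : IsotropicSymm (single i i (1 : ℤ)) :=
  ⟨transpose_single .., single_mul_stdSymplecticJ_mul_single (partner_ne i) _ _⟩

lemma isotropicSymm_single_add_single {i j : Fin (2 * g)} (hij : partner i ≠ j) :
    IsotropicSymm (single i j (1 : ℤ) + single j i 1) where
  transpose_eq := by simp [add_comm]
  mul_mul_eq_zero := by
    simp only [add_mul, mul_add, single_mul_stdSymplecticJ_mul_single hij,
      single_mul_stdSymplecticJ_mul_single (partner_ne _),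
      single_mul_stdSymplecticJ_mul_single fun h => hij (partner_eq_iff.1 h ▸ rfl), add_zero]

lemma isotropicSymm_diagonal {d : Fin (2 * g) → ℤ} (hd : ∀ i, d i * d (partner i) = 0) :
    IsotropicSymm (diagonal d) where
  transpose_eq := diagonal_transpose d
  mul_mul_eq_zero := by
    ext i j
    rw [mul_diagonal, diagonal_mul, stdSymplecticJ_apply, Matrix.zero_apply]
    split_ifs with hij
    · rw [← hij]
      linear_combination partnerSign i * hd i
    · simp

end Shear

section IntegerVector

variable {ι : Type*} [Fintype ι] [DecidableEq ι] {x : ι → ℤ} {i : ι}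

lemma vecMul_single_one (v : ι → ℤ) (i j : ι) : v ᵥ* single i j 1 = Pi.single j (v i) := by
  ext k
  simp [vecMul, dotProduct, single_apply, Pi.single_apply, ite_and, eq_comm]

lemma exists_natAbs_add_mul_lt {a b : ℤ} (hb : b ≠ 0) (hab : b.natAbs ≤ a.natAbs) :
    ∃ c : ℤ, (a + c * b).natAbs < a.natAbs := by
  rcases le_total 0 a with ha | ha <;> rcases le_total 0 b with hb' | hb'
  · exact ⟨-1, by lia⟩
  · exact ⟨1, by lia⟩
  · exact ⟨1, by lia⟩
  · exact ⟨-1, by lia⟩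

/-- The `ℓ¹` norm of an integer vector. -/
def l1Norm {ι : Type*} [Fintype ι] (x : ι → ℤ) : ℕ := ∑ i, (x i).natAbs

lemma l1Norm_add_single_lt {d : ℤ} (h : (x i + d).natAbs < (x i).natAbs) :
    l1Norm (x + Pi.single i d) < l1Norm x := by
  refine Finset.sum_lt_sum (fun j _ => ?_) ⟨i, Finset.mem_univ i, by simpa using h⟩
  rcases eq_or_ne j i with rfl | hj
  · simpa using h.le
  · simp [hj]

lemma exists_eq_single_of_dotProduct_eq_one (hx : ∃ z, x ⬝ᵥ z = 1)
    (hsub : ∀ i j, x i ≠ 0 → x j ≠ 0 → i = j) :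
    ∃ i a, x = Pi.single i a ∧ a * a = 1 := by
  obtain ⟨z, hz⟩ := hx
  obtain ⟨i, hi⟩ : ∃ i, x i ≠ 0 := by
    by_contra! h0
    simp [show x = 0 from funext h0] at hz
  have hxi : x = Pi.single i (x i) := by
    ext j
    rcases eq_or_ne j i with rfl | hj
    · simp
    · rw [Pi.single_eq_of_ne hj]
      exact by_contra fun hj0 => hj (hsub j i hj0 hi)
  refine ⟨i, x i, hxi, Int.isUnit_mul_self (.of_mul_eq_one (z i) ?_)⟩
  rwa [hxi, single_dotProduct] at hz

end IntegerVector

section Generation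

variable {g : ℕ} {A : Finset (Fin (2 * g))} {x y z : Fin (2 * g) → ℤ} {i j p : Fin (2 * g)}

/-- The finite set of elementary symplectic matrices. -/
def elementarySet (g : ℕ) : Set (Sp g) :=
  (Set.range fun i => (isotropicSymm_single i).shear (.ofAdd 1)) ∪
    Set.range fun ij : {ij : Fin (2 * g) × Fin (2 * g) // partner ij.1 ≠ ij.2} ↦
      (isotropicSymm_single_add_single ij.2).shear (.ofAdd 1)

lemma finite_elementarySet (g : ℕ) : (elementarySet g).Finite :=
  (Set.finite_range _).union (Set.finite_range _)

lemma shear_mem_closure {B : Matrix (Fin (2 * g)) (Fin (2 * g)) ℤ} {hB : IsotropicSymm B}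
    (h : hB.shear (.ofAdd 1) ∈ elementarySet g) (c : ℤ) :
    hB.shear (.ofAdd c) ∈ Subgroup.closure (elementarySet g) := by
  have hpow : Multiplicative.ofAdd c = Multiplicative.ofAdd (1 : ℤ) ^ c := by
    rw [← ofAdd_zsmul, smul_eq_mul, mul_one]
  rw [hpow, map_zpow]
  exact zpow_mem (Subgroup.subset_closure h) c

/-- The standard basis row vectors indexed by `A` are fixed by `M`. -/
def FixesBasis (A : Finset (Fin (2 * g))) (M : Sp g) : Prop :=
  ∀ i ∈ A, Pi.single i 1 ᵥ* stdRep M = Pi.single i 1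

/-- `RowReach A x y`: some product of elementary matrices fixes the basis row vectors indexed by `A`
and maps the row vector `x` to `y`. -/
def RowReach (A : Finset (Fin (2 * g))) (x y : Fin (2 * g) → ℤ) : Prop :=
  ∃ h ∈ Subgroup.closure (elementarySet g), FixesBasis A h ∧ x ᵥ* stdRep h = y

namespace RowReach

lemma trans (hxy : RowReach A x y) (hyz : RowReach A y z) : RowReach A x z := by
  obtain ⟨a, ha, haA, rfl⟩ := hxy
  obtain ⟨b, hb, hbA, rfl⟩ := hyz
  refine ⟨a * b, mul_mem ha hb, fun i hi => ?_, by rw [map_mul, vecMul_vecMul]⟩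
  rw [map_mul, ← vecMul_vecMul, haA i hi, hbA i hi]

lemma exists_dotProduct_eq_one (h : RowReach A x y) (hx : ∃ z, x ⬝ᵥ z = 1) :
    ∃ z, y ⬝ᵥ z = 1 := by
  obtain ⟨a, -, -, rfl⟩ := h
  obtain ⟨z, hz⟩ := hx
  refine ⟨stdRep a⁻¹ *ᵥ z, ?_⟩
  rw [← dotProduct_mulVec, mulVec_mulVec, ← map_mul, mul_inv_cancel, map_one, one_mulVec, hz]

lemma of_forall_vecMul {h : Sp g} (hh : h ∈ Subgroup.closure (elementarySet g))
    {f : (Fin (2 * g) → ℤ) → Fin (2 * g) → ℤ} (hf : ∀ x, x ᵥ* stdRep h = x + f x)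
    (hA : ∀ i ∈ A, f (Pi.single i 1) = 0) (x : Fin (2 * g) → ℤ) : RowReach A x (x + f x) :=
  ⟨h, hh, fun i hi => by rw [hf, hA i hi, add_zero], hf x⟩

lemma add_single_partner (hi : partner i ∉ A) (x : Fin (2 * g) → ℤ) (c : ℤ) :
    RowReach A x (x + Pi.single i (c * x (partner i))) := by
  refine of_forall_vecMul (shear_mem_closure (.inl ⟨i, rfl⟩) (-partnerSign i * c))
    (f := fun x => Pi.single i (c * x (partner i))) (fun x => ?_) (fun k hk => ?_) x
  · rw [vecMul_stdRep_shear, vecMul_single_one, vecMul_stdSymplecticJ, ← Pi.single_smul,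
      smul_eq_mul]
    congr 2
    linear_combination (c * x (partner i)) * partnerSign_mul_self i
  · simp [ne_of_mem_of_not_mem hk hi]

lemma exists_add_single_add_single (hij : i ≠ j) (hi : partner i ∉ A) (hj : j ∉ A)
    (x : Fin (2 * g) → ℤ) (c : ℤ) :
    ∃ c', RowReach A x
      (x + (Pi.single i (c * x j) + Pi.single (partner j) (c' * x (partner i)))) := by
  have hne : partner i ≠ partner j := partner_involutive.injective.ne hij
  refine ⟨-partnerSign i * partnerSign j * c, of_forall_vecMul
    (shear_mem_closure (.inr ⟨⟨(i, partner j), hne⟩, rfl⟩) (partnerSign j * c))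
    (f := fun x => Pi.single i (c * x j) +
      Pi.single (partner j) (-partnerSign i * partnerSign j * c * x (partner i)))
    (fun x => ?_) (fun k hk => ?_) x⟩
  · rw [vecMul_stdRep_shear, vecMul_add, vecMul_single_one, vecMul_single_one,
      vecMul_stdSymplecticJ, vecMul_stdSymplecticJ, smul_add, ← Pi.single_smul, ← Pi.single_smul,
      smul_eq_mul, smul_eq_mul, partner_partner, partnerSign_partner,
      add_comm (Pi.single (partner j) _)]
    congr 3
    · linear_combination (c * x j) * partnerSign_mul_self j
    · ring
  · simp [ne_of_mem_of_not_mem hk hi, ne_of_mem_of_not_mem hk hj]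

lemma add_single (hij : i ≠ j) (hi : partner i ∉ A) (hj : j ∉ A) (hx : x (partner i) = 0) (c : ℤ) :
    RowReach A x (x + Pi.single i (c * x j)) := by
  obtain ⟨c', h⟩ := exists_add_single_add_single hij hi hj x c
  rwa [hx, mul_zero, Pi.single_zero, add_zero] at h

lemma single_partner_single {a b : ℤ} (ha : a * a = 1) (hb : b * b = 1) (hi : i ∉ A)
    (hi' : partner i ∉ A) : RowReach A (Pi.single (partner i) a) (Pi.single i b) := by
  have hfill := add_single_partner hi' (Pi.single (partner i) a) (a * b)
  refine hfill.trans ?_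
  have hclear := add_single_partner (i := partner i) (by rwa [partner_partner])
    (Pi.single (partner i) a + Pi.single i (a * b * (Pi.single (partner i) a : _ → ℤ) (partner i)))
    (-(a * b))
  convert hclear using 1
  rw [partner_partner, Pi.add_apply, Pi.single_eq_same, Pi.single_eq_same,
    Pi.single_eq_of_ne (ne_partner i), zero_add, add_right_comm, ← Pi.single_add,
    show a * b * a = b by linear_combination b * ha,
    show a + -(a * b) * b = 0 by linear_combination -a * hb, Pi.single_zero, zero_add]

lemma single_single {a : ℤ} (ha : a * a = 1) (hA : ∀ k, partner k ∈ A ↔ k ∈ A) (hi : i ∉ A)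
    (hp : p ∉ A) : RowReach A (Pi.single i a) (Pi.single p 1) := by
  rcases eq_or_ne i (partner p) with rfl | hip'
  · exact single_partner_single ha rfl hp (by rwa [hA])
  rcases eq_or_ne i p with rfl | hip
  · have hswap := single_partner_single (i := partner i) (b := 1) ha rfl (by rwa [hA]) (by simpa)
    rw [partner_partner] at hswap
    exact hswap.trans (single_partner_single rfl rfl hp (by rwa [hA]))
  have hip'' : partner i ≠ p := fun h => hip' (partner_eq_iff.1 h)
  refine (add_single hip.symm (by rwa [hA]) hi (by simp [hip'.symm]) a).trans ?_
  rw [Pi.single_eq_same, ha]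
  have hclear := add_single (x := Pi.single i a + Pi.single p 1) hip (by rwa [hA]) hp
    (by simp [partner_ne, hip'']) (-a)
  simpa [hip.symm, add_right_comm, ← Pi.single_add] using hclear

end RowReach

/-- Euclid's algorithm: the smaller of two nonzero entries is used to shorten the larger one. -/
lemma RowReach.exists_l1Norm_lt (hA : ∀ k, partner k ∈ A ↔ k ∈ A) (hx : ∀ k ∈ A, x k = 0)
    (hij : i ≠ j) (hi : x i ≠ 0) (hj : x j ≠ 0) :
    ∃ k d, k ∉ A ∧ RowReach A x (x + Pi.single k d) ∧ l1Norm (x + Pi.single k d) < l1Norm x := by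
  have hmem {k} (hk : x k ≠ 0) : k ∉ A := mt (hx k) hk
  by_cases hpair : ∃ k, x k ≠ 0 ∧ x (partner k) ≠ 0
  · obtain ⟨k, hk, hk', hle⟩ : ∃ k, x k ≠ 0 ∧ x (partner k) ≠ 0 ∧
        (x (partner k)).natAbs ≤ (x k).natAbs := by
      obtain ⟨k, hk, hk'⟩ := hpair
      rcases le_total (x (partner k)).natAbs (x k).natAbs with h | h
      · exact ⟨k, hk, hk', h⟩
      · exact ⟨partner k, hk', by rwa [partner_partner], by rwa [partner_partner]⟩
    obtain ⟨c, hc⟩ := exists_natAbs_add_mul_lt hk' hle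
    exact ⟨k, _, hmem hk, .add_single_partner (hmem hk') x c, l1Norm_add_single_lt hc⟩
  push Not at hpair
  wlog hle : (x j).natAbs ≤ (x i).natAbs generalizing i j
  · exact this hij.symm hj hi (le_of_not_ge hle)
  obtain ⟨c, hc⟩ := exists_natAbs_add_mul_lt hj hle
  exact ⟨i, _, hmem hi, .add_single hij (by simpa [hA] using hmem hi) (hmem hj) (hpair i hi) c,
    l1Norm_add_single_lt hc⟩

lemma rowReach_single_of_dotProduct_eq_one (hA : ∀ k, partner k ∈ A ↔ k ∈ A) (hp : p ∉ A)
    (hx : ∀ k ∈ A, x k = 0) (hz : ∃ z, x ⬝ᵥ z = 1) : RowReach A x (Pi.single p 1) := by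
  induction hl : l1Norm x using Nat.strong_induction_on generalizing x with
  | _ l ih =>
  by_cases hsub : ∀ i j, x i ≠ 0 → x j ≠ 0 → i = j
  · obtain ⟨i, a, rfl, ha⟩ := exists_eq_single_of_dotProduct_eq_one hz hsub
    refine .single_single ha hA (fun hi => ?_) hp
    simp [show a = 0 by simpa using hx i hi] at ha
  · push Not at hsub
    obtain ⟨i, j, hi, hj, hij⟩ := hsub
    obtain ⟨k, d, hk, hreach, hlt⟩ := RowReach.exists_l1Norm_lt hA hx hij hi hj
    refine hreach.trans (ih _ (hl ▸ hlt) (fun m hm => ?_) (hreach.exists_dotProduct_eq_one hz) rfl)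
    simp [hx m hm, ne_of_mem_of_not_mem hm hk]

lemma rowReach_single_partner (hA : ∀ k, partner k ∈ A ↔ k ∈ A) (hp : p ∉ A) (hx : ∀ k ∈ A, x k = 0)
    (hxp : x (partner p) = 1) (T : Finset (Fin (2 * g)))
    (hT : ∀ k ∉ T, k ≠ p → k ≠ partner p → x k = 0) :
    RowReach (insert p A) x (Pi.single (partner p) 1) := by
  have hp' : partner p ∉ insert p A := by simp [partner_ne, hA, hp]
  induction T using Finset.induction_on generalizing x with
  | empty =>
    convert RowReach.add_single_partner hp' x (-x p) using 1
    ext k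
    rcases eq_or_ne k p with rfl | hk
    · simp [hxp, ne_partner]
    rcases eq_or_ne k (partner p) with rfl | hk'
    · simp [hxp, partner_ne]
    simp [hk, hk', hT k (Finset.notMem_empty k) hk hk']
  | insert j T hj ih =>
    by_cases hxj : j = p ∨ j = partner p ∨ x j = 0
    · refine ih hx hxp fun k hk hkp hkp' => ?_
      grind
    push Not at hxj
    obtain ⟨hjp, hjp', hxj⟩ := hxj
    have hjA : partner j ∉ insert p A := by
      simpa [partner_eq_iff, hjp', hA] using mt (hx j) hxj
    obtain ⟨c, hreach⟩ := RowReach.exists_add_single_add_single hjp' hjA hp' x (-x j)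
    rw [partner_partner, hxp, mul_one] at hreach
    refine hreach.trans (ih (fun k hk => ?_) ?_ fun k hk hkp hkp' => ?_)
    · simp [hx k hk, ne_of_mem_of_not_mem hk hp, ne_of_mem_of_not_mem hk (mt (hx j) hxj)]
    · simp [hxp, hjp'.symm, partner_ne]
    · rcases eq_or_ne k j with rfl | hkj
      · simp [hkp]
      · simp [hkp, hkj, hT k (by simp [hkj, hk]) hkp hkp']

lemma FixesBasis.stdRep_apply_partner {M : Sp g} (hM : FixesBasis A M) (hi : i ∈ A)
    (j : Fin (2 * g)) : stdRep M j (partner i) = partnerSign i * stdSymplecticJ g i j := by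
  have h := congrFun (congrArg (Pi.single i 1 ᵥ* ·) (stdRep_mul_stdSymplecticJ_mul_transpose M)) j
  rw [← vecMul_vecMul, ← vecMul_vecMul, hM i hi, vecMul_transpose, single_one_vecMul] at h
  replace h : stdRep M j (partner i) * partnerSign i = stdSymplecticJ g i j := by
    simpa [mulVec, dotProduct, stdSymplecticJ_apply] using h
  linear_combination partnerSign i * h - stdRep M j (partner i) * partnerSign_mul_self i

lemma FixesBasis.stdRep_apply_eq_zero {M : Sp g} (hM : FixesBasis A M)
    (hA : ∀ k, partner k ∈ A ↔ k ∈ A) (hj : j ∉ A) (hi : i ∈ A) : stdRep M j i = 0 := by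
  have h := hM.stdRep_apply_partner ((hA i).2 hi) j
  rwa [stdSymplecticJ_apply, partner_partner, if_neg (ne_of_mem_of_not_mem hi hj), mul_zero] at h

lemma mem_closure_of_rowReach {M : Sp g} (hM : FixesBasis A M)
    (hp : RowReach A ((stdRep M).row p) (Pi.single p 1))
    (hinsert : ∀ N, FixesBasis (insert p A) N → N ∈ Subgroup.closure (elementarySet g)) :
    M ∈ Subgroup.closure (elementarySet g) := by
  obtain ⟨h, hh, hhA, hph⟩ := hp
  refine (Subgroup.mul_mem_cancel_right _ hh).1 (hinsert (M * h) fun i hi => ?_)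
  rw [map_mul, ← vecMul_vecMul]
  rcases Finset.mem_insert.1 hi with rfl | hiA
  · rwa [single_one_vecMul]
  · rw [hM i hiA, hhA i hiA]

lemma mem_closure_elementarySet_of_fixesBasis (hA : ∀ k, partner k ∈ A ↔ k ∈ A) {M : Sp g}
    (hM : FixesBasis A M) : M ∈ Subgroup.closure (elementarySet g) := by
  induction A using WellFoundedGT.induction generalizing M with
  | _ A ih =>
  by_cases huniv : ∀ p, p ∈ A
  · have hM1 : M = 1 := stdRep_injective <| ext_of_single_vecMul fun i => by
      rw [hM i (huniv i), map_one, vecMul_one]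
    exact hM1 ▸ one_mem _
  push Not at huniv
  obtain ⟨p, hp⟩ := huniv
  have hp' : partner p ∉ A := by rwa [hA]
  have hunimod : ∃ z, (stdRep M).row p ⬝ᵥ z = 1 :=
    ⟨fun j => stdRep M⁻¹ j p, by
      have h : stdRep M * stdRep M⁻¹ = 1 := by rw [← map_mul, mul_inv_cancel, map_one]
      simpa [mul_apply, dotProduct] using congrFun₂ h p p⟩
  refine mem_closure_of_rowReach hM (rowReach_single_of_dotProduct_eq_one hA hp
    (fun i hi => hM.stdRep_apply_eq_zero hA hp hi) hunimod) fun N hN => ?_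
  have hN' : stdRep N (partner p) (partner p) = 1 := by
    rw [hN.stdRep_apply_partner (Finset.mem_insert_self p A), stdSymplecticJ_apply, if_pos rfl,
      partnerSign_mul_self]
  refine mem_closure_of_rowReach hN (rowReach_single_partner hA hp (fun i hi ↦
    FixesBasis.stdRep_apply_eq_zero (fun k hk => hN k (Finset.mem_insert_of_mem hk)) hA hp' hi) hN'
    Finset.univ (by simp)) fun P hP => ih _ ?_ (fun k => ?_) hP
  · exact (Finset.ssubset_insert hp).trans_le (Finset.subset_insert _ _)
  · simp [partner_eq_iff, hA, or_left_comm]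

theorem fg_sp (g : ℕ) : Group.FG (Sp g) :=
  Group.fg_iff.2 ⟨elementarySet g, eq_top_iff.2 fun M _ ↦
    mem_closure_elementarySet_of_fixesBasis (A := ∅) (by simp) (by simp [FixesBasis]),
    finite_elementarySet g⟩

end Generation

section CongruenceSpan

variable {g q : ℕ}

/-- The complex span of the principal congruence subgroup of level `q`. -/
noncomputable def congruenceSpan (g q : ℕ) : Submodule ℂ (Matrix (Fin (2 * g)) (Fin (2 * g)) ℂ) :=
  .span ℂ (baseChange ℂ stdRep '' {x : Sp g | baseChange (ZMod q) stdRep x = 1})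

lemma mul_mem_congruenceSpan {X Y : Matrix (Fin (2 * g)) (Fin (2 * g)) ℂ}
    (hX : X ∈ congruenceSpan g q) (hY : Y ∈ congruenceSpan g q) : X * Y ∈ congruenceSpan g q := by
  have hXY := Submodule.mul_mem_mul hX hY
  rw [congruenceSpan, Submodule.span_mul_span] at hXY
  refine Submodule.span_mono ?_ hXY
  rintro _ ⟨_, ⟨x, hx, rfl⟩, _, ⟨y, hy, rfl⟩, rfl⟩
  exact ⟨x * y, by simp_all, map_mul _ x y⟩

lemma IsotropicSymm.map_mem_congruenceSpan (hq : q ≠ 0)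
    {B : Matrix (Fin (2 * g)) (Fin (2 * g)) ℤ} (hB : IsotropicSymm B) :
    (Int.castRingHom ℂ).mapMatrix (stdSymplecticJ g * B) ∈ congruenceSpan g q := by
  have hone : (1 : Matrix _ _ ℂ) ∈ congruenceSpan g q :=
    Submodule.subset_span ⟨1, map_one _, map_one _⟩
  have hshear : baseChange ℂ stdRep (hB.shear (.ofAdd (q : ℤ))) ∈ congruenceSpan g q :=
    Submodule.subset_span ⟨_, by simp [baseChange_stdRep_shear], rfl⟩
  rw [baseChange_stdRep_shear] at hshear
  have hdiff := Submodule.sub_mem _ hshear hone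
  rwa [add_sub_cancel_left, Int.cast_natCast,
    Submodule.smul_mem_iff _ (Nat.cast_ne_zero.mpr hq)] at hdiff

lemma map_stdSymplecticJ_mul_single (i j : Fin (2 * g)) :
    (Int.castRingHom ℂ).mapMatrix (stdSymplecticJ g * single (partner i) j 1) =
      (partnerSign i : ℂ) • single i j 1 := by
  ext k l
  rw [RingHom.mapMatrix_apply, map_apply, mul_apply, Finset.sum_eq_single (partner i)]
  · rcases eq_or_ne i k with rfl | hik
    · by_cases hjl : j = l <;> simp [stdSymplecticJ_apply, hjl]
    · simp [stdSymplecticJ_apply, partner_involutive.injective.eq_iff, hik, hik.symm]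
  · intro m _ hm
    simp [hm.symm]
  · simp

lemma partnerSign_smul_mem_iff {i : Fin (2 * g)} {X : Matrix (Fin (2 * g)) (Fin (2 * g)) ℂ} :
    (partnerSign i : ℂ) • X ∈ congruenceSpan g q ↔ X ∈ congruenceSpan g q :=
  Submodule.smul_mem_iff _ <| Int.cast_ne_zero.mpr fun h => by
    simpa [h] using partnerSign_mul_self i

lemma single_partner_mem_congruenceSpan (hq : q ≠ 0) (i : Fin (2 * g)) :
    single i (partner i) 1 ∈ congruenceSpan g q := by
  have hmem := (isotropicSymm_single (partner i)).map_mem_congruenceSpan hq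
  rwa [map_stdSymplecticJ_mul_single, partnerSign_smul_mem_iff] at hmem

lemma single_self_mem_congruenceSpan (hq : q ≠ 0) (i : Fin (2 * g)) :
    single i i 1 ∈ congruenceSpan g q := by
  have hmem := mul_mem_congruenceSpan (single_partner_mem_congruenceSpan hq i)
    (single_partner_mem_congruenceSpan hq (partner i))
  rwa [single_mul_single_same, partner_partner, one_mul] at hmem

lemma single_mem_congruenceSpan (hq : q ≠ 0) (i j : Fin (2 * g)) :
    single i j 1 ∈ congruenceSpan g q := by
  rcases eq_or_ne i j with rfl | hij
  · exact single_self_mem_congruenceSpan hq i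
  rcases eq_or_ne (partner i) j with rfl | hpartner
  · exact single_partner_mem_congruenceSpan hq i
  have hsymm : IsotropicSymm (single (partner i) j 1 + single j (partner i) 1) :=
    isotropicSymm_single_add_single (by rwa [partner_partner])
  have hrow := mul_mem_congruenceSpan (single_self_mem_congruenceSpan hq i)
    (hsymm.map_mem_congruenceSpan hq)
  have hother := map_stdSymplecticJ_mul_single (partner j) (partner i)
  rw [partner_partner] at hother
  rw [mul_add, map_add, map_stdSymplecticJ_mul_single, hother, mul_add, mul_smul_comm,
    mul_smul_comm, single_mul_single_same,
    single_mul_single_of_ne _ _ _ _ (mt partner_eq_iff.mpr hpartner), smul_zero, add_zero, one_mul,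
    partnerSign_smul_mem_iff] at hrow
  exact hrow

theorem congruenceSpan_eq_top (hq : q ≠ 0) : congruenceSpan g q = ⊤ := by
  refine eq_top_iff.mpr fun X _ => ?_
  rw [matrix_eq_sum_single X]
  refine Submodule.sum_mem _ fun i _ => Submodule.sum_mem _ fun j _ => ?_
  simpa [smul_single] using Submodule.smul_mem _ (X i j) (single_mem_congruenceSpan hq i j)

end CongruenceSpan

section Hyperbolic

variable {g : ℕ} {R : Type*} [CommRing R]

/-- The parameter of the `2 × 2` block of `hyperbolic g` that contains the index `i`; its value
makes the traces of the blocks pairwise distinct and at least `(2 * g) ^ 2`. -/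
def twist (i : Fin (2 * g)) : ℕ := (2 * g) ^ 2 + 1 + i / 2

lemma twist_pos (i : Fin (2 * g)) : 0 < twist i := by unfold twist; lia

lemma val_partner_div_two (i : Fin (2 * g)) : (partner i : ℕ) / 2 = i / 2 := by
  rw [val_partner]; split_ifs <;> lia

lemma val_partner_mod_two (i : Fin (2 * g)) : (partner i : ℕ) % 2 = 0 ↔ ¬ (i : ℕ) % 2 = 0 := by
  rw [val_partner]; split_ifs <;> lia

lemma twist_partner (i : Fin (2 * g)) : twist (partner i) = twist i := by
  rw [twist, val_partner_div_two, twist]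

/-- The product of an upper and a lower triangular shear in each hyperbolic plane. -/
def hyperbolic (g : ℕ) : Sp g :=
  (isotropicSymm_diagonal (d := fun i => if (i : ℕ) % 2 = 0 then (twist i : ℤ) else 0) fun i => by
    by_cases hi : (i : ℕ) % 2 = 0 <;> simp [val_partner_mod_two, hi]).shear (.ofAdd 1) *
  (isotropicSymm_diagonal (d := fun i => if (i : ℕ) % 2 = 0 then 0 else (-1 : ℤ)) fun i => by
    by_cases hi : (i : ℕ) % 2 = 0 <;> simp [val_partner_mod_two, hi]).shear (.ofAdd 1)

lemma baseChange_shear_diagonal_mulVec {d : Fin (2 * g) → ℤ} (hd : IsotropicSymm (diagonal d))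
    (v : Fin (2 * g) → R) (i : Fin (2 * g)) :
    (baseChange R stdRep (hd.shear (.ofAdd 1)) *ᵥ v) i =
      v i + partnerSign i * (d (partner i) * v (partner i)) := by
  rw [baseChange_stdRep_shear, Int.cast_one, one_smul, map_mul, add_mulVec, one_mulVec,
    ← mulVec_mulVec, Pi.add_apply, stdSymplecticJ_mulVec, RingHom.mapMatrix_apply,
    diagonal_map (map_zero _), mulVec_diagonal, eq_intCast]

lemma baseChange_hyperbolic_mulVec (v : Fin (2 * g) → R) (i : Fin (2 * g)) :
    (baseChange R stdRep (hyperbolic g) *ᵥ v) i =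
      if (i : ℕ) % 2 = 0 then v i - v (partner i)
      else (1 + twist i) * v i - twist i * v (partner i) := by
  rw [hyperbolic, map_mul, ← mulVec_mulVec]
  simp only [baseChange_shear_diagonal_mulVec, partner_partner]
  by_cases hi : (i : ℕ) % 2 = 0
  · simp only [val_partner_mod_two, partnerSign, hi, not_true_eq_false, if_true, if_false]
    push_cast
    ring
  · simp only [val_partner_mod_two, partnerSign, hi, not_false_eq_true, if_true, if_false,
      twist_partner]
    push_cast
    ring

lemma stdRep_hyperbolic_apply_self (i : Fin (2 * g)) :
    stdRep (hyperbolic g) i i = if (i : ℕ) % 2 = 0 then 1 else 1 + (twist i : ℤ) := by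
  have hcol := baseChange_hyperbolic_mulVec (Pi.single i (1 : ℤ)) i
  simpa [partner_ne, baseChange_apply] using hcol

lemma sq_le_trace_hyperbolic (hg : g ≠ 0) :
    ((2 * g : ℕ) : ℤ) ^ 2 ≤ (stdRep (hyperbolic g)).trace := by
  have hnonneg (i : Fin (2 * g)) : 0 ≤ stdRep (hyperbolic g) i i := by
    rw [stdRep_hyperbolic_apply_self]
    split_ifs <;> positivity
  calc ((2 * g : ℕ) : ℤ) ^ 2 ≤ stdRep (hyperbolic g) ⟨1, by lia⟩ ⟨1, by lia⟩ := by
        rw [stdRep_hyperbolic_apply_self, if_neg (by norm_num), twist]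
        push_cast
        lia
    _ ≤ (stdRep (hyperbolic g)).trace :=
        Finset.single_le_sum (f := fun i => stdRep (hyperbolic g) i i) (fun i _ => hnonneg i)
          (Finset.mem_univ _)

/-- The eigenvalues of `hyperbolic g`: those with index in a given hyperbolic plane are the two
roots of `X ^ 2 - (2 + twist i) * X + 1`. -/
noncomputable def hyperbolicEigenvalue (i : Fin (2 * g)) : ℝ :=
  (2 + twist i + partnerSign i * √((2 + twist i) ^ 2 - 4)) / 2

lemma hyperbolic_discrim_pos (i : Fin (2 * g)) : 0 < (2 + twist i : ℝ) ^ 2 - 4 := by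
  have : (0 : ℝ) < twist i := mod_cast twist_pos i
  nlinarith

lemma hyperbolicEigenvalue_isRoot (i : Fin (2 * g)) :
    hyperbolicEigenvalue i ^ 2 - (2 + twist i) * hyperbolicEigenvalue i + 1 = 0 := by
  have hsqrt := Real.sq_sqrt (hyperbolic_discrim_pos i).le
  have hsign : (partnerSign i : ℝ) * partnerSign i = 1 := mod_cast partnerSign_mul_self i
  unfold hyperbolicEigenvalue
  linear_combination hsqrt / 4 + √((2 + twist i : ℝ) ^ 2 - 4) ^ 2 / 4 * hsign

lemma hyperbolicEigenvalue_injective : Function.Injective (hyperbolicEigenvalue (g := g)) := by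
  intro i j hij
  have hi := hyperbolicEigenvalue_isRoot i
  have hj := hyperbolicEigenvalue_isRoot j
  rw [← hij] at hj
  have hne : hyperbolicEigenvalue i ≠ 0 := fun h => by norm_num [h] at hi
  have htwist : (twist i : ℝ) = twist j :=
    mul_right_cancel₀ hne (by linear_combination hj - hi)
  have hblock : (i : ℕ) / 2 = j / 2 := by
    have := Nat.cast_injective htwist
    unfold twist at this
    lia
  have hsign : (partnerSign i : ℝ) = partnerSign j := by
    refine mul_right_cancel₀ (Real.sqrt_pos.mpr (hyperbolic_discrim_pos i)).ne' ?_
    unfold hyperbolicEigenvalue at hij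
    rw [← htwist] at hij
    linear_combination 2 * hij
  have := Int.cast_injective hsign
  unfold partnerSign at this
  apply Fin.ext
  split_ifs at this <;> lia

lemma hasEigenvalue_hyperbolic (a : Fin (2 * g)) :
    Module.End.HasEigenvalue (toLin' (baseChange ℂ stdRep (hyperbolic g)))
      (hyperbolicEigenvalue a : ℂ) := by
  have hroot : (hyperbolicEigenvalue a : ℂ) ^ 2 - (2 + twist a) * hyperbolicEigenvalue a + 1 = 0 :=
    mod_cast hyperbolicEigenvalue_isRoot a
  let v (i : Fin (2 * g)) : ℂ :=
    if (i : ℕ) / 2 = a / 2 then if (i : ℕ) % 2 = 0 then 1 else 1 - hyperbolicEigenvalue a else 0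
  refine Module.End.hasEigenvalue_of_hasEigenvector (x := v)
    (Module.End.hasEigenvector_iff.mpr ⟨Module.End.mem_eigenspace_iff.mpr ?_, fun hv => ?_⟩)
  · ext i
    rw [toLin'_apply, baseChange_hyperbolic_mulVec, Pi.smul_apply, smul_eq_mul]
    by_cases hblock : (i : ℕ) / 2 = a / 2
    · have htwist : twist i = twist a := by rw [twist, hblock, twist]
      by_cases hi : (i : ℕ) % 2 = 0
      · simp [v, val_partner_div_two, val_partner_mod_two, hblock, hi]
      · simp only [v, val_partner_div_two, val_partner_mod_two, hblock, hi, htwist,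
          not_false_eq_true, if_true, if_false]
        linear_combination hroot
    · simp [v, val_partner_div_two, hblock]
  · have heven := congrFun hv ⟨2 * (a / 2), by lia⟩
    simp [v] at heven

lemma separable_charpoly_hyperbolic : (baseChange ℂ stdRep (hyperbolic g)).charpoly.Separable :=
  separable_charpoly_of_hasEigenvalue
    (Complex.ofReal_injective.comp hyperbolicEigenvalue_injective) hasEigenvalue_hyperbolic

end Hyperbolic

/-- for `g ≥ 1`, `Sp(2g,ℤ)` is finitely generated and has uniformly
exponential growth. -/
theorem sp_fg_and_uniform_exponential_growth (g : ℕ) (hg : 1 ≤ g) :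
    Group.FG (Sp g) ∧ 1 < minGrowth (Sp g) := by
  have : Nontrivial (Fin (2 * g)) := Fin.nontrivial_iff_two_le.mpr (by lia)
  refine ⟨fg_sp g, one_lt_minGrowth_of_span_eq_top (fg_sp g) separable_charpoly_hyperbolic ?_
    fun q hq => congruenceSpan_eq_top hq⟩
  rw [Fintype.card_fin]
  exact sq_le_trace_hyperbolic (by lia)
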